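/- Let p ∈ (1, ∞). Let Φ be a Φ-function such that Φ ∈ (Inc)_p ∩ (Dec), sup_{t>0} Φ(t)Φ(t^{-1}) < ∞, and φ := Φ' is continuous on (0, ∞). Assume there is a Φ-function Ψ ∈ (aInc)_p ∩ (Dec) and a constant K ≥ 1 such that Φ(ts)/Φ(t) ≤ K·Ψ(s) for all t, s > 0. Then there exist positive constants C and c depending only on Φ, Ψ, p such that for every N-dimensional subspace X_N ⊂ C(Ω) with the constant function 1 ∈ X_N, there are a set x = {x₁, …, x_m} ⊂ Ω of cardinality m ≤ c·Ψ(N^{1/min{p,2}})·(log 2N)³ and positive weights λ₁, …, λ_m with λ₁ + … + λ_m = 1 such that ‖f‖_Φ ≤ C·(M_{Φ,Ψ}(m))^{1/p}·‖f‖_{Ψ,x,λ} for all f ∈ X_N, where M_{Φ,Ψ}(m) := max{1, max{Ψ(t)/Φ(t) : t ∈ [Φ^{-1}(1), Φ^{-1}(m)]}}. -/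

import Mathlib

open MeasureTheory

noncomputable section

/-- The sup-norm (uniform norm) `‖f‖_∞ = sup_{x ∈ Ω} |f x|` of a real-valued function. -/
def supNorm {Ω : Type*} (f : Ω → ℝ) : ℝ := ⨆ x, |f x|

/-- The Luxemburg functional `‖f‖_Φ = inf {λ > 0 : ∫ Φ(|f|/λ) dμ ≤ 1}`. -/
def luxNorm {Ω : Type*} [MeasurableSpace Ω] (μ : Measure Ω) (Φ : ℝ → ℝ) (f : Ω → ℝ) : ℝ :=
  sInf {lam : ℝ | 0 < lam ∧ ∫ x, Φ (|f x| / lam) ∂μ ≤ 1}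

/-- The discrete Luxemburg functional `‖f‖_{Φ,x}` with respect to the uniform discrete
probability measure `(1/m) ∑_{j=1}^m δ_{x_j}`. -/
def discLuxNorm {Ω : Type*} (Φ : ℝ → ℝ) {m : ℕ} (x : Fin m → Ω) (f : Ω → ℝ) : ℝ :=
  sInf {lam : ℝ | 0 < lam ∧ (∑ j, Φ (|f (x j)| / lam)) / (m : ℝ) ≤ 1}

/-- The weighted discrete Luxemburg functional `‖f‖_{Φ,x,λ}` with respect to the discrete
probability measure `∑_{j=1}^m λ_j δ_{x_j}`. -/
def wDiscLuxNorm {Ω : Type*} (Φ : ℝ → ℝ) {m : ℕ} (x : Fin m → Ω) (w : Fin m → ℝ)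
    (f : Ω → ℝ) : ℝ :=
  sInf {lam : ℝ | 0 < lam ∧ (∑ j, w j * Φ (|f (x j)| / lam)) ≤ 1}

/-- `Φ : [0,∞) → [0,∞)` is a Φ-prefunction: increasing, `Φ(0) = 0`, `Φ(0+) = 0`,
`Φ(∞) = ∞` (stated for a function on `ℝ`, with the relevant conditions on `[0,∞)`). -/
structure IsPhiPrefun (Φ : ℝ → ℝ) : Prop where
  mono : MonotoneOn Φ (Set.Ici 0)
  map_zero : Φ 0 = 0
  nonneg : ∀ t : ℝ, 0 ≤ t → 0 ≤ Φ t
  tendsto_zero : Filter.Tendsto Φ (nhdsWithin 0 (Set.Ioi 0)) (nhds 0)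
  tendsto_atTop : Filter.Tendsto Φ Filter.atTop Filter.atTop

/-- `Φ ∈ (aInc)_p` with constant `a`: `t ↦ Φ(t) t^{-p}` is almost increasing on `(0,∞)`. -/
def AIncP (Φ : ℝ → ℝ) (p a : ℝ) : Prop :=
  ∀ s t : ℝ, 0 < s → s < t → Φ s / s ^ p ≤ a * (Φ t / t ^ p)

/-- `Φ ∈ (Inc)_p` : `t ↦ Φ(t) t^{-p}` is increasing on `(0,∞)`. -/
def IncP (Φ : ℝ → ℝ) (p : ℝ) : Prop :=
  ∀ s t : ℝ, 0 < s → s < t → Φ s / s ^ p ≤ Φ t / t ^ p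

/-- `Φ ∈ (Dec)_q` : `t ↦ Φ(t) t^{-q}` is decreasing on `(0,∞)`. -/
def DecQ (Φ : ℝ → ℝ) (q : ℝ) : Prop :=
  ∀ s t : ℝ, 0 < s → s < t → Φ t / t ^ q ≤ Φ s / s ^ q

/-- `Φ ∈ (aDec)_q` with constant `b`: `t ↦ Φ(t) t^{-q}` is almost decreasing on `(0,∞)`. -/
def ADecQ (Φ : ℝ → ℝ) (q b : ℝ) : Prop :=
  ∀ s t : ℝ, 0 < s → s < t → Φ t / t ^ q ≤ b * (Φ s / s ^ q)

/-- `t ↦ Φ(t) t^{-p}` is almost increasing with constant `a` on `(t_*, ∞)`. -/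
def AIncPOn (Φ : ℝ → ℝ) (p a tstar : ℝ) : Prop :=
  ∀ s t : ℝ, tstar < s → s < t → Φ s / s ^ p ≤ a * (Φ t / t ^ p)

/-- `t ↦ Φ(t) t^{-q}` is almost decreasing with constant `b` on `(t_*, ∞)`. -/
def ADecQOn (Φ : ℝ → ℝ) (q b tstar : ℝ) : Prop :=
  ∀ s t : ℝ, tstar < s → s < t → Φ t / t ^ q ≤ b * (Φ s / s ^ q)

/-- Entropy numbers `e_n(F, d)` of a set `F` with respect to a distance-like function `dd`:
the infimum of `ε > 0` such that `F` can be covered by `2^{2^n}` (one, for `n = 0`)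
`ε`-balls centered in `F`. -/
def entropyNumD {X : Type*} (dd : X → X → ℝ) (F : Set X) (n : ℕ) : ℝ :=
  sInf {ε : ℝ | 0 < ε ∧ ∃ T : Finset X, ↑T ⊆ F ∧
    T.card ≤ (if n = 0 then 1 else 2 ^ 2 ^ n) ∧ ∀ f ∈ F, ∃ g ∈ T, dd f g < ε}

/-- Sampling numbers `ϱ_m(F, ‖·‖)`: recovery by linear methods from samples at `m` points. -/
def sampNum {Ω : Type*} (nrm : (Ω → ℝ) → ℝ) (F : Set (Ω → ℝ)) (m : ℕ) : ℝ :=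
  sInf {r : ℝ | ∃ (x : Fin m → Ω) (T : (Fin m → ℝ) →ₗ[ℝ] (Ω → ℝ)),
    r = ⨆ f ∈ F, nrm (fun y => f y - T (fun j => f (x j)) y)}

/-- Modified sampling numbers `ϱ*_m(F, ‖·‖)`: recovery by arbitrary methods mapping into a
subspace of dimension at most `m`, from samples at `m` points. -/
def sampNumStar {Ω : Type*} (nrm : (Ω → ℝ) → ℝ) (F : Set (Ω → ℝ)) (m : ℕ) : ℝ :=
  sInf {r : ℝ | ∃ (x : Fin m → Ω) (Y : Submodule ℝ (Ω → ℝ)), Module.finrank ℝ Y ≤ m ∧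
    ∃ T : (Fin m → ℝ) → Ω → ℝ, (∀ v, T v ∈ Y) ∧
    r = ⨆ f ∈ F, nrm (fun y => f y - T (fun j => f (x j)) y)}

/-- Kolmogorov width `d_N(F, ‖·‖_∞)` : infimum over `N`-dimensional subspaces of `C(Ω)` of the
worst-case best approximation error in the uniform norm. -/
def kolWidth {Ω : Type*} [TopologicalSpace Ω] (F : Set (Ω → ℝ)) (N : ℕ) : ℝ :=
  sInf {r : ℝ | ∃ X : Submodule ℝ (Ω → ℝ), Module.finrank ℝ X = N ∧
    (∀ u ∈ X, Continuous u) ∧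
    r = ⨆ f ∈ F, sInf ((fun u => supNorm (fun y => f y - u y)) '' (X : Set (Ω → ℝ)))}

end
/-- `M_{Φ,Ψ}(m) = max{1, max{Ψ(t)/Φ(t) : t ∈ [Φ⁻¹(1), Φ⁻¹(m)]}}`, the interval
`[Φ⁻¹(1), Φ⁻¹(m)]` being expressed through the condition `Φ(t) ∈ [1, m]`. -/
noncomputable def MOf (Φ Ψ : ℝ → ℝ) (m : ℝ) : ℝ :=
  max 1 (sSup ((fun t => Ψ t / Φ t) '' {t : ℝ | 0 < t ∧ 1 ≤ Φ t ∧ Φ t ≤ m}))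


noncomputable section
namespace S13

abbrev EE (N : ℕ) := EuclideanSpace ℝ (Fin N)

def rho {N : ℕ} (x : EE N) : ℝ := Real.exp (-(‖x‖ ^ 2 / 2))

lemma rho_pos {N : ℕ} (x : EE N) : 0 < rho x := Real.exp_pos _

lemma rho_neg {N : ℕ} (x : EE N) : rho (-x) = rho x := by simp [rho]

lemma rho_int (N : ℕ) : Integrable (rho : EE N → ℝ) := by
  have h := GaussianFourier.integrable_cexp_neg_mul_sq_norm_add (V := EE N)
    (b := (1/2 : ℂ)) (by norm_num) 0 0
  have h2 := h.re
  refine h2.congr (Filter.Eventually.of_forall fun x => ?_)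
  simp only [rho]
  have : (-(1/2:ℂ) * (‖x‖:ℂ)^2 + 0 * ((inner ℝ (0: EE N) x : ℝ) : ℂ)) = ((-(‖x‖^2/2) : ℝ) : ℂ) := by
    push_cast; ring
  simp only [this]
  exact Complex.exp_ofReal_re _

lemma rho_add {N : ℕ} (x y : EE N) :
    rho (x + y) = rho x * (Real.exp (-(‖y‖^2/2)) * Real.exp (-(inner ℝ x y))) := by
  simp only [rho, ← Real.exp_add]
  congr 1
  rw [@norm_add_sq_real]; ring

lemma rho_Z_pos (N : ℕ) : 0 < ∫ x : EE N, rho x := by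
  rw [integral_pos_iff_support_of_nonneg (fun x => (rho_pos x).le) (rho_int N)]
  have : Function.support (rho : EE N → ℝ) = Set.univ := by
    ext x; simp [(rho_pos x).ne']
  rw [this]; exact Measure.measure_univ_pos.2 (NeZero.ne _)

/-- indicator of the set where all functionals are at most `s`. -/
def chi {N : ℕ} {ι : Type} (e : ι → EE N) (s : ℝ) (x : EE N) : ℝ :=
  Set.indicator {x : EE N | ∀ i, |inner ℝ x (e i)| ≤ s} (fun _ => (1:ℝ)) x

lemma chi_meas {N : ℕ} {ι : Type} (e : ι → EE N) (s : ℝ) :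
    MeasurableSet {x : EE N | ∀ i, |inner ℝ x (e i)| ≤ s} := by
  apply IsClosed.measurableSet
  rw [Set.ofPred_forall]
  refine isClosed_iInter fun i => isClosed_le (by fun_prop) (by fun_prop)

lemma chi_neg {N : ℕ} {ι : Type} (e : ι → EE N) (s : ℝ) (x : EE N) : chi e s (-x) = chi e s x := by
  have : ∀ i, |inner ℝ (-x) (e i)| = |inner ℝ x (e i)| := fun i => by rw [inner_neg_left, abs_neg]
  have hiff : (-x) ∈ {x : EE N | ∀ i, |inner ℝ x (e i)| ≤ s} ↔ x ∈ {x : EE N | ∀ i, |inner ℝ x (e i)| ≤ s} :=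
    forall_congr' fun i => by rw [this i]
  unfold chi
  by_cases h : x ∈ {x : EE N | ∀ i, |inner ℝ x (e i)| ≤ s}
  · rw [Set.indicator_of_mem h, Set.indicator_of_mem (hiff.2 h)]
  · rw [Set.indicator_of_notMem h, Set.indicator_of_notMem (fun h' => h (hiff.1 h'))]

lemma chi_nonneg {N : ℕ} {ι : Type} (e : ι → EE N) (s : ℝ) (x : EE N) : 0 ≤ chi e s x := by
  unfold chi; exact Set.indicator_nonneg (fun _ _ => zero_le_one) _

lemma chi_le_one {N : ℕ} {ι : Type} (e : ι → EE N) (s : ℝ) (x : EE N) : chi e s x ≤ 1 := by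
  unfold chi; exact Set.indicator_le_self' (fun _ _ => zero_le_one) _

lemma chi_mul_int {N : ℕ} {ι : Type} (e : ι → EE N) (s : ℝ) {f : EE N → ℝ} (hf : Integrable f) (y : EE N) :
    Integrable (fun x => chi e s (x + y) * f x) := by
  refine hf.bdd_mul (c := 1) ?_ ?_
  · apply Measurable.aestronglyMeasurable
    exact (measurable_const.indicator (chi_meas e s)).comp (measurable_id.add_const y)
  · refine Filter.Eventually.of_forall fun x => ?_
    rw [Real.norm_eq_abs, abs_of_nonneg (chi_nonneg _ _ _)]; exact chi_le_one _ _ _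

/-- Small-ball property. -/
def SB {N : ℕ} {ι : Type} (e : ι → EE N) (L : ℝ) : Prop :=
  (∫ x : EE N, rho x) / 2 ≤ ∫ x : EE N, chi e (Real.sqrt L) x * rho x

lemma shift_ge {N : ℕ} {ι : Type} (e : ι → EE N) (s : ℝ) (y : EE N) :
    Real.exp (-(‖y‖^2/2)) * ∫ x : EE N, chi e s x * rho x ≤ ∫ x : EE N, chi e s x * rho (x + y) := by
  have hi : ∀ z : EE N, Integrable (fun x : EE N => chi e s x * rho (x + z)) := fun z => by
    simpa using chi_mul_int e s ((rho_int N).comp_add_right z) 0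
  have h0 : Integrable (fun x : EE N => chi e s x * rho x) := by simpa using hi 0
  have h1 : ∫ x : EE N, chi e s x * rho (x + y) = ∫ x : EE N, chi e s x * rho (x + -y) := by
    rw [← integral_neg_eq_self]
    refine integral_congr_ae (Filter.Eventually.of_forall fun x => ?_)
    simp only [chi_neg]
    rw [← rho_neg (-x + y)]; congr 2; abel
  have h2 : ∫ x : EE N, chi e s x * rho (x + y)
      = ∫ x : EE N, (chi e s x * rho (x + y) + chi e s x * rho (x + -y)) / 2 := by
    rw [integral_div, integral_add (hi _) (hi _), ← h1]; ring
  rw [h2, ← integral_const_mul]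
  refine integral_mono (h0.const_mul _) (((hi _).add (hi _)).div_const 2) fun x => ?_
  have hc := chi_nonneg e s x
  simp only [rho_add, norm_neg, inner_neg_right, neg_neg]
  have h3 : 2 ≤ Real.exp (-(inner ℝ x y)) + Real.exp (inner ℝ x y) := by
    have := Real.one_le_cosh (inner ℝ x y)
    rw [Real.cosh_eq] at this; linarith
  have h4 : 0 ≤ chi e s x * rho x * Real.exp (-(‖y‖^2/2)) :=
    mul_nonneg (mul_nonneg hc (rho_pos x).le) (Real.exp_pos _).le
  nlinarith

lemma dual_sudakov {N : ℕ} {ι : Type} (e : ι → EE N) {L : ℝ} (hL : 0 < L) (hSB : SB e L)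
    (S : Finset (EE N)) (c0 : EE N) (R t : ℝ) (ht : 0 < t)
    (hR : ∀ z ∈ S, ‖z - c0‖ ^ 2 ≤ R)
    (hsep : ∀ z ∈ S, ∀ z' ∈ S, z ≠ z' → ∃ i, t < |inner ℝ (z - z') (e i)|) :
    (S.card : ℝ) ≤ 2 * Real.exp (2 * L * R / t ^ 2) := by
  set s := Real.sqrt L with hs
  have hs0 : 0 < s := Real.sqrt_pos.2 hL
  have hss : s ^ 2 = L := Real.sq_sqrt hL.le
  set l := 2 * s / t with hl
  have hl0 : 0 < l := by positivity
  set Z := ∫ x : EE N, rho x with hZ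
  have hZ0 : 0 < Z := rho_Z_pos N
  have key : ∑ z ∈ S, ∫ x : EE N, chi e s (x + -(l • (z - c0))) * rho x ≤ Z := by
    rw [← integral_finsetSum S (fun z _ => chi_mul_int e s (rho_int N) _)]
    refine integral_mono (integrable_finsetSum S (fun z _ => chi_mul_int e s (rho_int N) _)) (rho_int N) fun x => ?_
    simp only
    rw [← Finset.sum_mul]
    refine mul_le_of_le_one_left (rho_pos x).le ?_
    by_cases hx : ∃ z ∈ S, chi e s (x + -(l • (z - c0))) ≠ 0
    · obtain ⟨z, hz, hz1⟩ := hx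
      rw [Finset.sum_eq_single_of_mem z hz]
      · exact chi_le_one _ _ _
      · intro z' hz' hne
        by_contra hz2
        have m1 : ∀ i, |inner ℝ (x + -(l • (z - c0))) (e i)| ≤ s := Set.mem_of_indicator_ne_zero hz1
        have m2 : ∀ i, |inner ℝ (x + -(l • (z' - c0))) (e i)| ≤ s := Set.mem_of_indicator_ne_zero hz2
        obtain ⟨i, hi⟩ := hsep z' hz' z hz hne
        have h1 := m1 i
        have h2 := m2 i
        have : inner ℝ (x + -(l • (z - c0))) (e i) - inner ℝ (x + -(l • (z' - c0))) (e i)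
            = l * inner ℝ (z' - z) (e i) := by
          rw [← inner_sub_left, ← real_inner_smul_left]; congr 1; module
        have h3 : |l * inner ℝ (z' - z) (e i)| ≤ 2 * s := by
          rw [← this]; refine (abs_sub _ _).trans ?_; linarith
        rw [abs_mul, abs_of_pos hl0] at h3
        have h4 : l * t = 2 * s := by rw [hl]; field_simp
        nlinarith
    · push Not at hx
      rw [Finset.sum_eq_zero hx]; exact zero_le_one
  have each : ∀ z ∈ S, Real.exp (-(2 * L * R / t^2)) * (Z / 2) ≤
      ∫ x : EE N, chi e s (x + -(l • (z - c0))) * rho x := by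
    intro z hz
    have h1 : ∫ x : EE N, chi e s (x + -(l • (z - c0))) * rho x
        = ∫ x : EE N, chi e s x * rho (x + l • (z - c0)) := by
      rw [← integral_add_right_eq_self (fun x => chi e s (x + -(l • (z - c0))) * rho x) (l • (z - c0))]
      simp
    rw [h1]
    refine le_trans ?_ (shift_ge e s _)
    refine mul_le_mul ?_ hSB (by positivity) (Real.exp_pos _).le
    apply Real.exp_le_exp.2
    rw [norm_smul, mul_pow, Real.norm_eq_abs, sq_abs, hl, neg_le_neg_iff]
    have := hR z hz
    calc (2 * s / t)^2 * ‖z - c0‖^2 / 2 = 2 * L * ‖z - c0‖^2 / t^2 := by rw [← hss]; field_simp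
      _ ≤ _ := by gcongr
  have := (Finset.sum_le_sum each).trans key
  rw [Finset.sum_const, nsmul_eq_mul, Real.exp_neg] at this
  have he := Real.exp_pos (2 * L * R / t^2)
  have h5 : (S.card : ℝ) * (Real.exp (2 * L * R / t^2))⁻¹ ≤ 2 := by
    by_contra h; push Not at h; nlinarith
  rwa [← div_eq_mul_inv, div_le_iff₀ he] at h5

lemma mgf {N : ℕ} (y : EE N) :
    ∫ x : EE N, Real.exp (inner ℝ x y) * rho x = Real.exp (‖y‖^2/2) * ∫ x : EE N, rho x := by
  rw [← integral_add_right_eq_self (fun x : EE N => rho x) (-y), ← integral_const_mul]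
  refine integral_congr_ae (Filter.Eventually.of_forall fun x => ?_)
  simp only [rho_add, norm_neg, inner_neg_right, neg_neg]
  rw [Real.exp_neg]
  have := Real.exp_pos (‖y‖^2/2)
  field_simp

lemma mgf_int {N : ℕ} (y : EE N) : Integrable (fun x : EE N => Real.exp (inner ℝ x y) * rho x) := by
  have h := ((rho_int N).comp_add_right (-y)).const_mul (Real.exp (‖y‖^2/2))
  refine h.congr (Filter.Eventually.of_forall fun x => ?_)
  simp only [rho_add, norm_neg, inner_neg_right, neg_neg]
  rw [Real.exp_neg]
  have := Real.exp_pos (‖y‖^2/2)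
  field_simp

lemma SB_finite {N : ℕ} {ι : Type} [Fintype ι] [Nonempty ι] (e : ι → EE N) (he : ∀ i, ‖e i‖ ≤ 1) {L : ℝ}
    (hL : 2 * Real.log (4 * Fintype.card ι) ≤ L) : SB e L := by
  set n : ℝ := (Fintype.card ι : ℝ) with hn
  have hn1 : 1 ≤ n := by rw [hn]; exact_mod_cast Fintype.card_pos
  have hlog : 0 < Real.log (4 * n) := Real.log_pos (by linarith)
  have hL0 : 0 < L := by linarith
  set s := Real.sqrt L with hs
  have hs0 : 0 < s := Real.sqrt_pos.2 hL0
  have hss : s ^ 2 = L := Real.sq_sqrt hL0.le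
  set Z := ∫ x : EE N, rho x with hZ
  have hZ0 : 0 < Z := rho_Z_pos N
  unfold SB
  have hpt : ∀ x : EE N, rho x - chi e s x * rho x ≤
      ∑ i, Real.exp (-L) * (Real.exp (inner ℝ x (s • e i)) * rho x + Real.exp (inner ℝ x (-(s • e i))) * rho x) := by
    intro x
    have hr := rho_pos x
    have hnn : ∀ i, 0 ≤ Real.exp (-L) * (Real.exp (inner ℝ x (s • e i)) * rho x + Real.exp (inner ℝ x (-(s • e i))) * rho x) := fun i => by positivity
    by_cases hx : ∀ i, |inner ℝ x (e i)| ≤ s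
    · have : chi e s x = 1 := Set.indicator_of_mem (s := {x : EE N | ∀ i, |inner ℝ x (e i)| ≤ s}) hx _
      rw [this]; simp only [one_mul, sub_self]; exact Finset.sum_nonneg fun i _ => hnn i
    · have : chi e s x = 0 := Set.indicator_of_notMem (s := {x : EE N | ∀ i, |inner ℝ x (e i)| ≤ s}) hx _
      rw [this, zero_mul, sub_zero]
      push Not at hx
      obtain ⟨i, hi⟩ := hx
      refine le_trans ?_ (Finset.single_le_sum (fun i _ => hnn i) (Finset.mem_univ i))
      rw [← add_mul, ← mul_assoc]
      refine le_mul_of_one_le_left hr.le ?_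
      rw [mul_add, ← Real.exp_add, ← Real.exp_add, inner_neg_right, real_inner_smul_right]
      rcases lt_abs.1 hi with h | h
      · have : 1 ≤ Real.exp (-L + s * inner ℝ x (e i)) := Real.one_le_exp (by nlinarith)
        have := Real.exp_pos (-L + -(s * inner ℝ x (e i))); linarith
      · have : 1 ≤ Real.exp (-L + -(s * inner ℝ x (e i))) := Real.one_le_exp (by nlinarith)
        have := Real.exp_pos (-L + (s * inner ℝ x (e i))); linarith
  have hci : Integrable (fun x : EE N => chi e s x * rho x) := by
    simpa using chi_mul_int e s (rho_int N) 0
  have hIntg := integral_mono ((rho_int N).sub hci) (integrable_finsetSum _ fun i _ =>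
    ((mgf_int (s • e i)).add (mgf_int (-(s • e i)))).const_mul (Real.exp (-L))) hpt
  have e1 : ∫ x : EE N, ((rho : EE N → ℝ) - fun x : EE N => chi e s x * rho x) x = Z - ∫ x : EE N, chi e s x * rho x :=
    integral_sub (rho_int N) hci
  rw [e1] at hIntg
  rw [integral_finsetSum _ (fun i _ =>
    ((mgf_int (s • e i)).add (mgf_int (-(s • e i)))).const_mul (Real.exp (-L)))] at hIntg
  have e2 : ∀ i, ∫ x : EE N, Real.exp (-L) * ((fun x : EE N => Real.exp (inner ℝ x (s • e i)) * rho x) + (fun x : EE N => Real.exp (inner ℝ x (-(s • e i))) * rho x)) x ≤ 2 * Real.exp (-(L/2)) * Z := by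
    intro i
    rw [integral_const_mul, integral_add' (mgf_int _) (mgf_int _), mgf, mgf, norm_neg]
    have h1 : Real.exp (‖s • e i‖^2/2) ≤ Real.exp (L/2) := by
      apply Real.exp_le_exp.2
      rw [norm_smul, mul_pow, Real.norm_eq_abs, sq_abs, hss]
      have := he i
      have h0 := norm_nonneg (e i)
      nlinarith [mul_nonneg hL0.le (by nlinarith : 0 ≤ 1 - ‖e i‖^2)]
    have h2 : Real.exp (-L) * Real.exp (L/2) = Real.exp (-(L/2)) := by rw [← Real.exp_add]; ring_nf
    rw [← h2]
    have := mul_le_mul_of_nonneg_left h1 (mul_nonneg (Real.exp_pos (-L)).le hZ0.le)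
    nlinarith
  have e3 := Finset.sum_le_sum (s := (Finset.univ : Finset ι)) fun i _ => e2 i
  rw [Finset.sum_const, nsmul_eq_mul, Finset.card_univ, ← hn] at e3
  have e4 : Real.exp (-(L/2)) ≤ (4 * n)⁻¹ := by
    rw [Real.exp_neg]
    apply inv_anti₀ (by positivity)
    rw [← Real.exp_log (show 0 < 4 * n by positivity)]
    exact Real.exp_le_exp.2 (by linarith)
  have e5 : n * (2 * Real.exp (-(L/2)) * Z) ≤ Z / 2 := by
    have := mul_le_mul_of_nonneg_left e4 (by positivity : 0 ≤ 2 * n * Z)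
    have e6 : 2 * n * Z * (4*n)⁻¹ = Z / 2 := by field_simp; norm_num
    linarith
  have : Z - ∫ x : EE N, chi e s x * rho x ≤ Z / 2 := hIntg.trans (e3.trans e5)
  linarith

lemma SB_mono {N : ℕ} {ι κ : Type} (e : ι → EE N) (d : κ → EE N) {L L' : ℝ}
    (h : ∀ x : EE N, (∀ k, |inner ℝ x (d k)| ≤ Real.sqrt L) → ∀ i, |inner ℝ x (e i)| ≤ Real.sqrt L')
    (hd : SB d L) : SB e L' := by
  refine le_trans hd ?_
  refine integral_mono (by simpa using chi_mul_int d _ (rho_int N) 0) (by simpa using chi_mul_int e _ (rho_int N) 0) fun x => ?_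
  refine mul_le_mul_of_nonneg_right ?_ (rho_pos x).le
  by_cases hx : ∀ k, |inner ℝ x (d k)| ≤ Real.sqrt L
  · have h2 : chi e (Real.sqrt L') x = 1 := Set.indicator_of_mem (s := {x : EE N | ∀ i, |inner ℝ x (e i)| ≤ Real.sqrt L'}) (h x hx) _
    rw [h2]; exact chi_le_one _ _ _
  · have h2 : chi d (Real.sqrt L) x = 0 := Set.indicator_of_notMem (s := {x : EE N | ∀ i, |inner ℝ x (d i)| ≤ Real.sqrt L}) hx _
    rw [h2]; exact chi_nonneg _ _ _

lemma SB_dim {N : ℕ} (hN : 1 ≤ N) {ι : Type} (e : ι → EE N) (he : ∀ i, ‖e i‖ ≤ 1) {L : ℝ}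
    (hL : N * (2 * Real.log (4 * N)) ≤ L) : SB e L := by
  have : Nonempty (Fin N) := ⟨⟨0, hN⟩⟩
  refine SB_mono e (fun k : Fin N => EuclideanSpace.single k (1:ℝ)) (L := 2 * Real.log (4 * N)) ?_
    (SB_finite _ (by simp) (by simp))
  intro x hx i
  have hl : 0 ≤ 2 * Real.log (4 * N) := by
    have : (1:ℝ) ≤ N := by exact_mod_cast hN
    have := Real.log_nonneg (by linarith : (1:ℝ) ≤ 4 * N)
    linarith
  refine (abs_real_inner_le_norm _ _).trans ?_
  refine (mul_le_of_le_one_right (norm_nonneg _) (he i)).trans ?_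
  apply Real.le_sqrt_of_sq_le
  refine le_trans ?_ hL
  rw [EuclideanSpace.norm_sq_eq]
  have : ∀ k ∈ (Finset.univ : Finset (Fin N)), ‖x k‖ ^ 2 ≤ 2 * Real.log (4 * N) := fun k _ => by
    have := hx k
    simp only [EuclideanSpace.inner_single_right] at this
    have h3 : |x k| ≤ Real.sqrt (2 * Real.log (4 * N)) := by simpa using this
    rw [Real.norm_eq_abs]
    calc |x k|^2 ≤ (Real.sqrt (2 * Real.log (4 * N)))^2 := by gcongr
      _ = _ := Real.sq_sqrt hl
  simpa using Finset.sum_le_sum this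

end S13
end


noncomputable section
namespace S13

structure Setup {N : ℕ} {ι : Type} [Fintype ι] (e : ι → EE N) (ν : ι → ℝ) (D r : ℝ) : Prop where
  he : ∀ i, ‖e i‖ ≤ 1
  hν : ∀ i, 0 ≤ ν i
  hD : 1 ≤ D
  hr1 : 1 ≤ r
  hr2 : r ≤ 2
  hfr : ∀ z : EE N, ‖z‖ ^ 2 ≤ D * ∑ i, ν i * |inner ℝ z (e i)| ^ 2

variable {N : ℕ} {ι : Type} [Fintype ι] {e : ι → EE N} {ν : ι → ℝ} {D r : ℝ}

lemma Setup.interp (h : Setup e ν D r) (w : EE N) (u : ℝ) (hu : 0 ≤ u) (hw : ∀ i, |inner ℝ w (e i)| ≤ u)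
    (hs : ∑ i, ν i * |inner ℝ w (e i)| ^ r ≤ 16) : ‖w‖ ^ 2 ≤ 16 * D * u ^ (2 - r) := by
  have hD := h.hD
  refine (h.hfr w).trans ?_
  have : ∑ i, ν i * |inner ℝ w (e i)| ^ 2 ≤ u ^ (2 - r) * ∑ i, ν i * |inner ℝ w (e i)| ^ r := by
    rw [Finset.mul_sum]
    refine Finset.sum_le_sum fun i _ => ?_
    have ha := abs_nonneg (inner ℝ w (e i))
    have : |inner ℝ w (e i)| ^ 2 ≤ u ^ (2 - r) * |inner ℝ w (e i)| ^ r := by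
      rcases ha.eq_or_lt with h0 | h0
      · rw [← h0]; have := Real.rpow_nonneg hu (2 - r)
        have := Real.rpow_nonneg (le_refl (0:ℝ)) r
        simp; positivity
      · calc |inner ℝ w (e i)| ^ 2 = |inner ℝ w (e i)| ^ (2 - r) * |inner ℝ w (e i)| ^ r := by
              rw [← Real.rpow_add h0, sub_add_cancel]; norm_cast
          _ ≤ _ := by
            refine mul_le_mul_of_nonneg_right ?_ (Real.rpow_nonneg ha _)
            exact Real.rpow_le_rpow ha (hw i) (by linarith [h.hr2])
    nlinarith [h.hν i, mul_le_mul_of_nonneg_left this (h.hν i)]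
  have h2 := Real.rpow_nonneg hu (2 - r)
  calc D * ∑ i, ν i * |inner ℝ w (e i)| ^ 2 ≤ D * (u ^ (2 - r) * 16) := by
        refine mul_le_mul_of_nonneg_left (this.trans ?_) (by linarith)
        exact mul_le_mul_of_nonneg_left hs h2
    _ = _ := by ring

lemma Setup.sup_le (h : Setup e ν D r) (w : EE N)
    (hs : ∑ i, ν i * |inner ℝ w (e i)| ^ r ≤ 16) : ‖w‖ ^ r ≤ 16 * D := by
  have hD := h.hD
  have h1 := h.interp w ‖w‖ (norm_nonneg w) (fun i => (abs_real_inner_le_norm _ _).trans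
    (mul_le_of_le_one_right (norm_nonneg _) (h.he i))) hs
  rcases (norm_nonneg w).eq_or_lt with h0 | h0
  · rw [← h0, Real.zero_rpow (by linarith [h.hr1])]; positivity
  · have h2 : ‖w‖ ^ 2 = ‖w‖ ^ r * ‖w‖ ^ (2 - r) := by
      rw [← Real.rpow_add h0, add_sub_cancel]; norm_cast
    rw [h2] at h1
    exact le_of_mul_le_mul_right h1 (Real.rpow_pos_of_pos h0 _)

lemma Setup.inner_le (h : Setup e ν D r) (w : EE N) (i : ι) : |inner ℝ w (e i)| ≤ ‖w‖ :=
  (abs_real_inner_le_norm _ _).trans (mul_le_of_le_one_right (norm_nonneg _) (h.he i))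

lemma rpow_sub_le {a b r : ℝ} (hr1 : 1 ≤ r) (hr2 : r ≤ 2) : |a - b| ^ r ≤ 4 * (|a| ^ r + |b| ^ r) := by
  have h0 : |a - b| ≤ 2 * max |a| |b| := by
    have := abs_sub a b
    have := le_max_left |a| |b|
    have := le_max_right |a| |b|
    linarith
  have hm : 0 ≤ max |a| |b| := le_max_of_le_left (abs_nonneg _)
  calc |a - b| ^ r ≤ (2 * max |a| |b|) ^ r := Real.rpow_le_rpow (abs_nonneg _) h0 (by linarith)
    _ = 2 ^ r * (max |a| |b|) ^ r := Real.mul_rpow (by norm_num) hm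
    _ ≤ 4 * (|a| ^ r + |b| ^ r) := by
      have h1 : (2:ℝ) ^ r ≤ 4 := by
        calc (2:ℝ) ^ r ≤ 2 ^ (2:ℝ) := Real.rpow_le_rpow_of_exponent_le (by norm_num) hr2
          _ = 4 := by norm_num
      have h2 : (max |a| |b|) ^ r ≤ |a| ^ r + |b| ^ r := by
        have := Real.rpow_nonneg (abs_nonneg a) r
        have := Real.rpow_nonneg (abs_nonneg b) r
        rcases max_choice |a| |b| with h | h <;> rw [h] <;> linarith
      exact mul_le_mul h1 h2 (Real.rpow_nonneg hm _) (by norm_num)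

lemma Setup.diff (h : Setup e ν D r) {z z' : EE N} (hz : ∑ i, ν i * |inner ℝ z (e i)| ^ r ≤ 2)
    (hz' : ∑ i, ν i * |inner ℝ z' (e i)| ^ r ≤ 2) : ∑ i, ν i * |inner ℝ (z - z') (e i)| ^ r ≤ 16 := by
  have : ∑ i, ν i * |inner ℝ (z - z') (e i)| ^ r ≤
      ∑ i, (4 * (ν i * |inner ℝ z (e i)| ^ r) + 4 * (ν i * |inner ℝ z' (e i)| ^ r)) := by
    refine Finset.sum_le_sum fun i _ => ?_
    rw [inner_sub_left]
    have := mul_le_mul_of_nonneg_left (rpow_sub_le (a := inner ℝ z (e i)) (b := inner ℝ z' (e i)) h.hr1 h.hr2) (h.hν i)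
    linarith
  rw [Finset.sum_add_distrib, ← Finset.mul_sum, ← Finset.mul_sum] at this
  linarith

def Sep (e : ι → EE N) (t : ℝ) (S : Finset (EE N)) : Prop :=
  ∀ z ∈ S, ∀ z' ∈ S, z ≠ z' → ∃ i, t < |inner ℝ (z - z') (e i)|

/-- existence of maximal separated subset, under a bound on cardinalities -/
lemma exists_net (e : ι → EE N) (t : ℝ) (ht : 0 ≤ t) (P : EE N → Prop) (B : ℕ)
    (hB : ∀ S : Finset (EE N), (∀ z ∈ S, P z) → Sep e t S → S.card ≤ B) :
    ∃ S : Finset (EE N), (∀ z ∈ S, P z) ∧ Sep e t S ∧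
      ∀ z, P z → ∃ c ∈ S, ∀ i, |inner ℝ (z - c) (e i)| ≤ t := by
  classical
  let Q : ℕ → Prop := fun n => ∃ S : Finset (EE N), (∀ z ∈ S, P z) ∧ Sep e t S ∧ S.card = n
  have hQ0 : Q 0 := ⟨∅, by simp, by intro z hz; simp at hz, rfl⟩
  have hQ := Nat.findGreatest_spec (P := Q) (Nat.zero_le B) hQ0
  obtain ⟨S, hS1, hS2, hS3⟩ := hQ
  refine ⟨S, hS1, hS2, fun z hz => ?_⟩
  by_contra hcon
  push Not at hcon
  have hzS : z ∉ S := fun h => by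
    obtain ⟨i, hi⟩ := hcon z h; simp at hi; linarith
  have hsep : Sep e t (insert z S) := by
    intro a ha b hb hab
    rw [Finset.mem_insert] at ha hb
    rcases ha with rfl | ha <;> rcases hb with rfl | hb
    · exact absurd rfl hab
    · exact hcon b hb
    · obtain ⟨i, hi⟩ := hcon a ha
      refine ⟨i, ?_⟩
      rwa [← neg_sub, inner_neg_left, abs_neg]
    · exact hS2 a ha b hb hab
  have hP : ∀ a ∈ insert z S, P a := by
    intro a ha
    rcases Finset.mem_insert.1 ha with rfl | ha
    · exact hz
    · exact hS1 a ha
  have hle := hB _ hP hsep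
  have hc : (insert z S).card = S.card + 1 := Finset.card_insert_of_notMem hzS
  have := Nat.le_findGreatest (P := Q) hle ⟨_, hP, hsep, rfl⟩
  omega

lemma Setup.entropy_aux (h : Setup e ν D r) {L : ℝ} (hL : 1 ≤ L) (hSB : SB e L) (n : ℕ) :
    ∀ t : ℝ, 0 < t → 16 * D ≤ (2 ^ n * t) ^ r → ∀ S : Finset (EE N),
      (∀ z ∈ S, ∑ i, ν i * |inner ℝ z (e i)| ^ r ≤ 2) → Sep e t S →
      (S.card : ℝ) ≤ Real.exp (160 * (D * L * t ^ (-r))) := by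
  classical
  have hD := h.hD
  have hr1 := h.hr1
  have small : ∀ t : ℝ, 0 < t → 16 * D ≤ t ^ r → ∀ S : Finset (EE N),
      (∀ z ∈ S, ∑ i, ν i * |inner ℝ z (e i)| ^ r ≤ 2) → Sep e t S →
      (S.card : ℝ) ≤ Real.exp (160 * (D * L * t ^ (-r))) := by
    intro t ht htr S hS hsep
    have : S.card ≤ 1 := by
      rw [Finset.card_le_one]
      intro a ha b hb
      by_contra hab
      obtain ⟨i, hi⟩ := hsep a ha b hb hab
      have h1 := h.sup_le _ (h.diff (hS a ha) (hS b hb))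
      have h2 := h.inner_le (a - b) i
      have h3 : t ^ r < ‖a - b‖ ^ r := Real.rpow_lt_rpow ht.le (by linarith) (by linarith)
      linarith
    have h1 : (S.card : ℝ) ≤ 1 := by exact_mod_cast this
    refine h1.trans (Real.one_le_exp ?_)
    have := Real.rpow_pos_of_pos ht (-r)
    positivity
  induction n with
  | zero => intro t ht htr; exact small t ht (by simpa using htr)
  | succ n ih =>
    intro t ht htr S hS hsep
    by_cases hbig : 16 * D ≤ t ^ r
    · exact small t ht hbig S hS hsep
    push Not at hbig
    have ih' := ih (2 * t) (by positivity) (by rw [pow_succ] at htr; rwa [← mul_assoc])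
    obtain ⟨S', hS'1, hS'2, hS'3⟩ := exists_net e (2 * t) (by positivity) (fun z => z ∈ S) S.card
      (fun T hT _ => Finset.card_le_card hT)
    have hS'c := ih' S' (fun z hz => hS z (hS'1 z hz)) hS'2
    have htr0 := Real.rpow_pos_of_pos ht (-r)
    have hpiece : ∀ c ∈ S', ((S.filter fun z => ∀ i, |inner ℝ (z - c) (e i)| ≤ 2 * t).card : ℝ) ≤
        2 * Real.exp (64 * (D * L * t ^ (-r))) := by
      intro c hc
      refine (dual_sudakov e (by linarith) hSB _ c (16 * D * (2 * t) ^ (2 - r)) t ht ?_ ?_).trans ?_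
      · intro z hz
        rw [Finset.mem_filter] at hz
        exact h.interp _ _ (by positivity) hz.2 (h.diff (hS z hz.1) (hS c (hS'1 c hc)))
      · intro z hz z' hz'
        exact hsep z (Finset.mem_filter.1 hz).1 z' (Finset.mem_filter.1 hz').1
      · gcongr
        have h1 : (2 * t) ^ (2 - r) = 2 ^ (2 - r) * (t ^ 2 * t ^ (-r)) := by
          rw [Real.mul_rpow (by norm_num) ht.le, sub_eq_add_neg 2 r, Real.rpow_add ht 2 (-r)]
          norm_cast
        have h2 : (2:ℝ) ^ (2 - r) ≤ 2 := by
          calc (2:ℝ) ^ (2 - r) ≤ 2 ^ (1:ℝ) := Real.rpow_le_rpow_of_exponent_le (by norm_num) (by linarith)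
            _ = 2 := by norm_num
        rw [h1]
        have h3 : 2 * L * (16 * D * (2 ^ (2 - r) * (t ^ 2 * t ^ (-r)))) / t ^ 2 =
          32 * (D * L * t ^ (-r)) * 2 ^ (2 - r) := by field_simp; ring
        rw [h3]
        have : 0 ≤ 32 * (D * L * t ^ (-r)) := by positivity
        nlinarith
    have hcard : S.card ≤ ∑ c ∈ S', (S.filter fun z => ∀ i, |inner ℝ (z - c) (e i)| ≤ 2 * t).card := by
      refine le_trans (Finset.card_le_card ?_) Finset.card_biUnion_le
      intro z hz
      obtain ⟨c, hc, hc2⟩ := hS'3 z hz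
      exact Finset.mem_biUnion.2 ⟨c, hc, Finset.mem_filter.2 ⟨hz, hc2⟩⟩
    have hcard' : (S.card : ℝ) ≤ S'.card * (2 * Real.exp (64 * (D * L * t ^ (-r)))) := by
      calc (S.card : ℝ) ≤ ∑ c ∈ S', ((S.filter fun z => ∀ i, |inner ℝ (z - c) (e i)| ≤ 2 * t).card : ℝ) := by
            exact_mod_cast hcard
        _ ≤ _ := by
          refine (Finset.sum_le_sum hpiece).trans ?_
          rw [Finset.sum_const, nsmul_eq_mul]
    set Y := D * L * t ^ (-r) with hY
    have hY1 : 1 ≤ 16 * Y := by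
      have : t ^ r * t ^ (-r) = 1 := by rw [← Real.rpow_add ht]; simp
      have h4 : 1 ≤ 16 * D * t ^ (-r) := by nlinarith
      have : 16 * Y = 16 * D * t ^ (-r) * L := by rw [hY]; ring
      nlinarith
    have h2t : D * L * (2 * t) ^ (-r) ≤ Y / 2 := by
      rw [Real.mul_rpow (by norm_num) ht.le]
      have : (2:ℝ) ^ (-r) ≤ 1 / 2 := by
        calc (2:ℝ) ^ (-r) ≤ 2 ^ (-1:ℝ) := Real.rpow_le_rpow_of_exponent_le (by norm_num) (by linarith)
          _ = 1/2 := by norm_num [Real.rpow_neg]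
      have hY0 : 0 ≤ Y := by positivity
      calc D * L * (2 ^ (-r) * t ^ (-r)) = Y * 2 ^ (-r) := by rw [hY]; ring
        _ ≤ Y * (1/2) := by gcongr
        _ = _ := by ring
    have hexp2 : (2:ℝ) ≤ Real.exp (16 * Y) := by
      have := Real.add_one_le_exp (16 * Y); linarith
    calc (S.card : ℝ) ≤ S'.card * (2 * Real.exp (64 * Y)) := hcard'
      _ ≤ Real.exp (80 * Y) * (Real.exp (16 * Y) * Real.exp (64 * Y)) := by
        gcongr
        refine hS'c.trans (Real.exp_le_exp.2 ?_)
        linarith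
      _ = Real.exp (160 * Y) := by rw [← Real.exp_add, ← Real.exp_add]; ring_nf

lemma Setup.net (h : Setup e ν D r) {L : ℝ} (hL : 1 ≤ L) (hSB : SB e L) (t : ℝ) (ht : 0 < t) :
    ∃ S : Finset (EE N), (S.card : ℝ) ≤ Real.exp (160 * (D * L * t ^ (-r))) ∧
      ∀ z, ∑ i, ν i * |inner ℝ z (e i)| ^ r ≤ 2 → ∃ c ∈ S, ∀ i, |inner ℝ (z - c) (e i)| ≤ t := by
  have hD := h.hD
  obtain ⟨n, hn⟩ := pow_unbounded_of_one_lt (16 * D / t) (by norm_num : (1:ℝ) < 2)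
  rw [div_lt_iff₀ ht] at hn
  have hn2 : 16 * D ≤ (2 ^ n * t) ^ r := by
    refine hn.le.trans ?_
    have : 1 ≤ 2 ^ n * t := by linarith
    calc 2 ^ n * t = (2 ^ n * t) ^ (1:ℝ) := (Real.rpow_one _).symm
      _ ≤ _ := Real.rpow_le_rpow_of_exponent_le this h.hr1
  have hb := h.entropy_aux hL hSB n t ht hn2
  obtain ⟨S, h1, h2, h3⟩ := exists_net e t ht.le (fun z => ∑ i, ν i * |inner ℝ z (e i)| ^ r ≤ 2)
    (⌊Real.exp (160 * (D * L * t ^ (-r)))⌋₊) (fun S hS hs => Nat.le_floor (hb S hS hs))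
  exact ⟨S, hb S h1 h2, h3⟩

end S13
end


noncomputable section
namespace S13

structure PF (Φ : ℝ → ℝ) (p q : ℝ) : Prop where
  hp : 1 < p
  hq : 2 ≤ q
  mono : MonotoneOn Φ (Set.Ici 0)
  map_zero : Φ 0 = 0
  pos : ∀ t, 0 < t → 0 < Φ t
  cont : ContinuousOn Φ (Set.Ici 0)
  inc : ∀ s t : ℝ, 1 ≤ s → 0 ≤ t → s ^ p * Φ t ≤ Φ (s * t)
  dec : ∀ s t : ℝ, 1 ≤ s → 0 ≤ t → Φ (s * t) ≤ s ^ q * Φ t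

lemma PF.nonneg {Φ : ℝ → ℝ} {p q : ℝ} (h : PF Φ p q) (t : ℝ) (ht : 0 ≤ t) : 0 ≤ Φ t := by
  rcases ht.eq_or_lt with rfl | h0
  · rw [h.map_zero]
  · exact (h.pos t h0).le

lemma PF.inc1 {Φ : ℝ → ℝ} {p q : ℝ} (h : PF Φ p q) (s t : ℝ) (hs : 1 ≤ s) (ht : 0 ≤ t) :
    s * Φ t ≤ Φ (s * t) := by
  refine le_trans ?_ (h.inc s t hs ht)
  refine mul_le_mul_of_nonneg_right ?_ (h.nonneg t ht)
  calc s = s ^ (1:ℝ) := (Real.rpow_one s).symm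
    _ ≤ _ := Real.rpow_le_rpow_of_exponent_le hs h.hp.le

lemma PF.small {Φ : ℝ → ℝ} {p q : ℝ} (h : PF Φ p q) (s t : ℝ) (hs0 : 0 < s) (hs : s ≤ 1) (ht : 0 ≤ t) :
    Φ (s * t) ≤ s * Φ t := by
  have h1 := h.inc1 s⁻¹ (s * t) ((one_le_inv₀ hs0).2 hs) (by positivity)
  rw [← mul_assoc, inv_mul_cancel₀ hs0.ne', one_mul] at h1
  rwa [inv_mul_le_iff₀ hs0] at h1

variable {N : ℕ} {ι : Type} [Fintype ι]

def Adm (Φ : ℝ → ℝ) (a : ι → EE N) (μ : ι → ℝ) (T : EE N →L[ℝ] EE N) : Prop :=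
  ∑ i, μ i * Φ ‖T (a i)‖ ≤ 1

lemma adm_bdd {Φ : ℝ → ℝ} {p q : ℝ} (h : PF Φ p q) (a : ι → EE N) (μ : ι → ℝ) (hμ : ∀ i, 0 < μ i)
    (hspan : ∀ z : EE N, (∀ i, inner ℝ z (a i) = 0) → z = 0) :
    BddAbove ((fun T : EE N →L[ℝ] EE N => T.det) '' {T | Adm Φ a μ T}) := by
  let Θ : (EE N →L[ℝ] EE N) →ₗ[ℝ] (ι → EE N) :=
    { toFun := fun T i => T (a i), map_add' := fun _ _ => rfl, map_smul' := fun _ _ => rfl }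
  have hker : LinearMap.ker Θ = ⊥ := by
    rw [LinearMap.ker_eq_bot']
    intro T hT
    ext1 x
    have hadj : ∀ y : EE N, (ContinuousLinearMap.adjoint T) y = 0 := fun y => hspan _ fun i => by
      rw [ContinuousLinearMap.adjoint_inner_left]
      have : T (a i) = 0 := congrFun hT i
      rw [this, inner_zero_right]
    have h2 : inner ℝ (T x) (T x) = 0 := by
      rw [← ContinuousLinearMap.adjoint_inner_left, hadj, inner_zero_left]
    simpa using h2
  obtain ⟨K, hK0, hK⟩ := LinearMap.exists_antilipschitzWith Θ hker
  have hΦ : ∃ R : ℝ, 1 ≤ R ∧ ∀ i, ∀ t, 0 ≤ t → μ i * Φ t ≤ 1 → t ≤ R := by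
    have h1 : ∀ i : ι, ∃ R : ℝ, 1 ≤ R ∧ ∀ t, 0 ≤ t → μ i * Φ t ≤ 1 → t ≤ R := fun i => by
      refine ⟨max 1 (1 / (μ i * Φ 1)), le_max_left _ _, fun t ht ht1 => ?_⟩
      by_contra hc
      push Not at hc
      have h3 := (max_lt_iff.1 hc).1
      have h4 := (max_lt_iff.1 hc).2
      have h5 := h.inc1 t 1 h3.le (by norm_num)
      rw [mul_one] at h5
      have hp0 : 0 < μ i * Φ 1 := mul_pos (hμ i) (h.pos 1 one_pos)
      rw [div_lt_iff₀ hp0] at h4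
      nlinarith [mul_le_mul_of_nonneg_left h5 (hμ i).le]
    choose R hR1 hR2 using h1
    refine ⟨1 + ∑ i, R i, ?_, fun i t ht h => (hR2 i t ht h).trans ?_⟩
    · have := Finset.sum_nonneg (s := Finset.univ) fun i _ => (zero_le_one.trans (hR1 i))
      linarith
    · have := Finset.single_le_sum (f := R) (s := Finset.univ) (fun i _ => (zero_le_one.trans (hR1 i))) (Finset.mem_univ i)
      linarith
  obtain ⟨R, hR1, hR⟩ := hΦ
  have hsub : {T | Adm Φ a μ T} ⊆ Metric.closedBall (0 : EE N →L[ℝ] EE N) (K * R) := by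
    intro T hT
    rw [mem_closedBall_zero_iff]
    have h1 := hK.le_mul_dist T 0
    rw [dist_zero_right, map_zero, dist_zero_right] at h1
    refine h1.trans (mul_le_mul_of_nonneg_left ?_ K.2)
    rw [pi_norm_le_iff_of_nonneg (by linarith)]
    intro i
    refine hR i _ (norm_nonneg _) ?_
    refine le_trans ?_ hT
    exact Finset.single_le_sum (f := fun i => μ i * Φ ‖T (a i)‖) (fun j _ => mul_nonneg (hμ j).le (h.nonneg _ (norm_nonneg _))) (Finset.mem_univ i)
  refine BddAbove.mono (Set.image_mono hsub) ?_
  refine ((isCompact_closedBall _ _).image ?_).bddAbove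
  exact ContinuousLinearMap.continuous_det

lemma lewis {Φ : ℝ → ℝ} {p q : ℝ} (h : PF Φ p q) (hN : 1 ≤ N) (a : ι → EE N) (μ : ι → ℝ) (hμ : ∀ i, 0 < μ i)
    (hμ1 : ∑ i, μ i = 1)
    (hspan : ∀ z : EE N, (∀ i, inner ℝ z (a i) = 0) → z = 0) (ha : ∀ i, a i ≠ 0)
    (r : ℝ) (hr1 : 1 ≤ r) (hr2 : r ≤ 2) :
    ∃ b : ι → EE N, (∀ i, b i ≠ 0) ∧ (∀ z, ∃ z', ∀ i, inner ℝ z (a i) = inner ℝ z' (b i)) ∧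
      (∑ i, μ i * Φ ‖b i‖ ≤ 1) ∧
      Setup (fun i => (‖b i‖)⁻¹ • b i) (fun i => μ i * Φ ‖b i‖) (3 * 2 ^ q * N) r := by
  have hN' : (1:ℝ) ≤ N := by exact_mod_cast hN
  set V := (fun T : EE N →L[ℝ] EE N => T.det) '' {T | Adm Φ a μ T} with hV
  have hbdd : BddAbove V := adm_bdd h a μ hμ hspan
  -- a positive element
  have hpos : ∃ T : EE N →L[ℝ] EE N, Adm Φ a μ T ∧ 0 < T.det := by
    set B := ∑ i, μ i * Φ ‖a i‖ with hB
    have hB0 : 0 ≤ B := Finset.sum_nonneg fun i _ => mul_nonneg (hμ i).le (h.nonneg _ (norm_nonneg _))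
    refine ⟨(1 + B)⁻¹ • ContinuousLinearMap.id ℝ (EE N), ?_, ?_⟩
    · have hi : (1 + B)⁻¹ ≤ 1 := inv_le_one_of_one_le₀ (by linarith)
      calc ∑ i, μ i * Φ ‖((1 + B)⁻¹ • ContinuousLinearMap.id ℝ (EE N)) (a i)‖
          ≤ ∑ i, (1 + B)⁻¹ * (μ i * Φ ‖a i‖) := by
            refine Finset.sum_le_sum fun i _ => ?_
            have : ‖((1 + B)⁻¹ • ContinuousLinearMap.id ℝ (EE N)) (a i)‖ = (1 + B)⁻¹ * ‖a i‖ := by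
              simp [norm_smul, abs_of_nonneg (by linarith : 0 ≤ 1 + B)]
            rw [this]
            have := mul_le_mul_of_nonneg_left (h.small (1 + B)⁻¹ ‖a i‖ (by positivity) hi (norm_nonneg _)) (hμ i).le
            linarith
        _ = (1 + B)⁻¹ * B := by rw [← Finset.mul_sum]
        _ ≤ 1 := by rw [inv_mul_le_iff₀ (by positivity)]; linarith
    · have : ((1 + B)⁻¹ • ContinuousLinearMap.id ℝ (EE N)).det = ((1 + B)⁻¹) ^ N := by
        have h := LinearMap.det_smul ((1+B)⁻¹) (LinearMap.id : EE N →ₗ[ℝ] EE N)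
        rw [LinearMap.det_id, mul_one, finrank_euclideanSpace_fin] at h
        exact h
      rw [this]; positivity
  obtain ⟨T0, hT0, hT0d⟩ := hpos
  have hVne : V.Nonempty := ⟨_, T0, hT0, rfl⟩
  have hS0 : 0 < sSup V := hT0d.trans_le (le_csSup hbdd ⟨T0, hT0, rfl⟩)
  obtain ⟨_, ⟨T, hT, rfl⟩, hTd⟩ := exists_lt_of_lt_csSup hVne (show 9/10 * sSup V < sSup V by linarith)
  simp only at hTd
  have hTd0 : 0 < T.det := lt_trans (by positivity) hTd
  -- adjoint surjective etc.
  have hunit : IsUnit (LinearMap.det (T : EE N →ₗ[ℝ] EE N)) := isUnit_iff_ne_zero.2 hTd0.ne'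
  have hbij : Function.Bijective (T : EE N →ₗ[ℝ] EE N) := by
    rw [← Module.End.isUnit_iff]
    exact (LinearMap.isUnit_iff_isUnit_det _).2 hunit
  have hinj : Function.Injective T := hbij.1
  have hb0 : ∀ i, T (a i) ≠ 0 := fun i hi => ha i (hinj (by rw [hi, map_zero]))
  refine ⟨fun i => T (a i), hb0, ?_, hT, ?_⟩
  · intro z
    have hainj : Function.Injective (ContinuousLinearMap.adjoint T : EE N →ₗ[ℝ] EE N) := by
      rw [← LinearMap.ker_eq_bot, LinearMap.ker_eq_bot']
      intro y hy
      obtain ⟨x, hx⟩ := hbij.2 y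
      have hx' : T x = y := hx
      have hy' : (ContinuousLinearMap.adjoint T) y = 0 := hy
      have : inner ℝ y y = 0 := by
        nth_rw 2 [← hx']
        rw [← ContinuousLinearMap.adjoint_inner_left, hy', inner_zero_left]
      simpa using this
    have hsurj := LinearMap.surjective_of_injective hainj
    obtain ⟨z', hz'⟩ := hsurj z
    have hz'' : (ContinuousLinearMap.adjoint T) z' = z := hz'
    exact ⟨z', fun i => by rw [← hz'', ContinuousLinearMap.adjoint_inner_left]⟩
  set b : ι → EE N := fun i => T (a i) with hb
  have hv : ∀ i, 0 < ‖b i‖ := fun i => norm_pos_iff.2 (hb0 i)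
  have hν : ∀ i, 0 ≤ μ i * Φ ‖b i‖ := fun i => mul_nonneg (hμ i).le (h.nonneg _ (norm_nonneg _))
  have h2q : (1:ℝ) ≤ 2 ^ q := Real.one_le_rpow (by norm_num) (by linarith [h.hq])
  refine ⟨fun i => ?_, hν, ?_, hr1, hr2, ?_⟩
  · rw [norm_smul, norm_inv, norm_norm, inv_mul_cancel₀ (hv i).ne']
  · nlinarith
  -- unit vectors
  have hunitz : ∀ z : EE N, ‖z‖ = 1 → 1 ≤ (3 * 2 ^ q * N) * ∑ i, μ i * Φ ‖b i‖ * |inner ℝ z ((‖b i‖)⁻¹ • b i)| ^ 2 := by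
    intro z hz
    set ρ : ℝ := (3/5 : ℝ) ^ (1 / (N:ℝ)) with hρ
    have hρ0 : 0 < ρ := by positivity
    have hρ1 : ρ ≤ 1 := Real.rpow_le_one (by norm_num) (by norm_num) (by positivity)
    have hρN : ρ ^ N = 3/5 := by
      rw [hρ, ← Real.rpow_natCast, ← Real.rpow_mul (by norm_num), one_div, inv_mul_cancel₀ (by positivity), Real.rpow_one]
    let Sz : EE N →ₗ[ℝ] EE N := LinearMap.transvection ((innerSL ℝ z : EE N →L[ℝ] ℝ) : EE N →ₗ[ℝ] ℝ) z
    have hSz : ∀ x, Sz x = x + (inner ℝ z x : ℝ) • z := fun x => rfl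
    have hSzd : LinearMap.det Sz = 2 := by
      have := LinearMap.transvection.det ((innerSL ℝ z : EE N →L[ℝ] ℝ) : EE N →ₗ[ℝ] ℝ) z
      rw [show LinearMap.det Sz = _ from this]
      simp [hz]; norm_num
    let T' : EE N →ₗ[ℝ] EE N := ρ • (Sz ∘ₗ (T : EE N →ₗ[ℝ] EE N))
    have hT'd : LinearMap.det T' = 3/5 * (2 * T.det) := by
      rw [LinearMap.det_smul, LinearMap.det_comp, hSzd]
      simp [hρN]
    have hnot : ¬ Adm Φ a μ (LinearMap.toContinuousLinearMap T') := by
      intro hA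
      have : (LinearMap.toContinuousLinearMap T').det ≤ sSup V := le_csSup hbdd ⟨_, hA, rfl⟩
      have h2 : (LinearMap.toContinuousLinearMap T').det = LinearMap.det T' := rfl
      rw [h2, hT'd] at this
      linarith
    unfold Adm at hnot
    push Not at hnot
    have hterm : ∀ i, μ i * Φ ‖(LinearMap.toContinuousLinearMap T') (a i)‖ ≤
        ρ * (μ i * Φ ‖b i‖ + 2 ^ q * (μ i * Φ ‖b i‖ * |inner ℝ z ((‖b i‖)⁻¹ • b i)| ^ 2)) := by
      intro i
      have e1 : (LinearMap.toContinuousLinearMap T') (a i) = ρ • (b i + (inner ℝ z (b i) : ℝ) • z) := rfl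
      rw [e1, norm_smul, Real.norm_of_nonneg hρ0.le]
      set τ := |inner ℝ z ((‖b i‖)⁻¹ • b i)| ^ 2 with hτ
      have hτ0 : 0 ≤ τ := by positivity
      have hτ1 : τ ≤ 1 := by
        rw [hτ]; apply pow_le_one₀ (abs_nonneg _)
        refine (abs_real_inner_le_norm _ _).trans ?_
        rw [hz, one_mul, norm_smul, norm_inv, norm_norm, inv_mul_cancel₀ (hv i).ne']
      have hin : (inner ℝ z (b i) : ℝ) ^ 2 = τ * ‖b i‖ ^ 2 := by
        rw [hτ, real_inner_smul_right, sq_abs, mul_pow]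
        have := (hv i).ne'
        field_simp
      have e2 : ‖b i + (inner ℝ z (b i) : ℝ) • z‖ = Real.sqrt (1 + 3 * τ) * ‖b i‖ := by
        rw [← Real.sqrt_sq (norm_nonneg (b i + _)), ← Real.sqrt_sq (norm_nonneg (b i)), ← Real.sqrt_mul (by positivity)]
        congr 1
        rw [@norm_add_sq_real, norm_smul, hz, real_inner_smul_right, real_inner_comm z (b i), mul_one, Real.norm_eq_abs, sq_abs]
        linear_combination 3 * hin
      rw [e2]
      have hs1 : 1 ≤ Real.sqrt (1 + 3 * τ) := by rw [Real.one_le_sqrt]; linarith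
      have e3 := h.small ρ (Real.sqrt (1 + 3 * τ) * ‖b i‖) hρ0 hρ1 (by positivity)
      have e4 := h.dec (Real.sqrt (1 + 3 * τ)) ‖b i‖ hs1 (norm_nonneg _)
      have e5 : (Real.sqrt (1 + 3 * τ)) ^ q ≤ 1 + 2 ^ q * τ := by
        have c := (convexOn_rpow (by linarith [h.hq] : 1 ≤ q / 2)).2 (show (1:ℝ) ∈ Set.Ici 0 by norm_num)
          (show (4:ℝ) ∈ Set.Ici 0 by norm_num) (by linarith : 0 ≤ 1 - τ) hτ0 (by ring)
        simp only [smul_eq_mul, mul_one, Real.one_rpow] at c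
        have h4 : (4:ℝ) ^ (q/2) = 2 ^ q := by
          rw [show (4:ℝ) = 2 ^ (2:ℝ) by norm_num, ← Real.rpow_mul (by norm_num)]; congr 1; ring
        rw [h4, show 1 - τ + τ * 4 = 1 + 3 * τ by ring] at c
        rw [Real.sqrt_eq_rpow, ← Real.rpow_mul (by positivity), show 1/2 * q = q/2 by ring]
        linarith
      have e6 : Φ (ρ * (Real.sqrt (1 + 3 * τ) * ‖b i‖)) ≤ ρ * ((1 + 2 ^ q * τ) * Φ ‖b i‖) := by
        refine e3.trans (mul_le_mul_of_nonneg_left (e4.trans ?_) hρ0.le)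
        exact mul_le_mul_of_nonneg_right e5 (h.nonneg _ (norm_nonneg _))
      have := mul_le_mul_of_nonneg_left e6 (hμ i).le
      nlinarith
    have hsum := hnot.trans_le (Finset.sum_le_sum fun i _ => hterm i)
    rw [← Finset.mul_sum, Finset.sum_add_distrib, ← Finset.mul_sum] at hsum
    set Q := ∑ i, μ i * Φ ‖b i‖ * |inner ℝ z ((‖b i‖)⁻¹ • b i)| ^ 2 with hQ
    have hT1 : ∑ i, μ i * Φ ‖b i‖ ≤ 1 := hT
    have hQ0 : 0 ≤ Q := Finset.sum_nonneg fun i _ => mul_nonneg (hν i) (by positivity)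
    have h7 : 1 < ρ * (1 + 2 ^ q * Q) := hsum.trans_le (mul_le_mul_of_nonneg_left (by linarith) hρ0.le)
    have h8 : ρ * (1 + 2 / (5 * N)) ≤ 1 := by
      have hl : Real.log (3/5) ≤ -(2/5) := by
        have := Real.log_le_sub_one_of_pos (show (0:ℝ) < 3/5 by norm_num); linarith
      have : ρ ≤ Real.exp (-(2 / (5 * N))) := by
        rw [hρ, Real.rpow_def_of_pos (by norm_num)]
        apply Real.exp_le_exp.2
        have : Real.log (3/5) * (1 / (N:ℝ)) ≤ -(2/5) * (1 / (N:ℝ)) := mul_le_mul_of_nonneg_right hl (by positivity)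
        refine this.trans (le_of_eq ?_)
        field_simp
      have h9 := Real.add_one_le_exp (2 / (5 * (N:ℝ)))
      calc ρ * (1 + 2 / (5 * N)) ≤ Real.exp (-(2 / (5 * N))) * Real.exp (2 / (5 * N)) := by gcongr; linarith
        _ = 1 := by rw [← Real.exp_add]; simp
    have h10 : 2 / (5 * (N:ℝ)) < 2 ^ q * Q := by
      by_contra hc
      push Not at hc
      have := mul_le_mul_of_nonneg_left hc hρ0.le
      linarith
    rw [div_lt_iff₀ (by positivity)] at h10
    nlinarith
  intro z
  by_cases hz : z = 0
  · simp [hz]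
  have hz0 : 0 < ‖z‖ := norm_pos_iff.2 hz
  have h1 := hunitz (‖z‖⁻¹ • z) (by rw [norm_smul, norm_inv, norm_norm, inv_mul_cancel₀ hz0.ne'])
  have h2 : ∀ i, μ i * Φ ‖b i‖ * |inner ℝ (‖z‖⁻¹ • z) ((‖b i‖)⁻¹ • b i)| ^ 2
     = (‖z‖^2)⁻¹ * (μ i * Φ ‖b i‖ * |inner ℝ z ((‖b i‖)⁻¹ • b i)| ^ 2) := by
    intro i
    rw [real_inner_smul_left, abs_mul, mul_pow, abs_inv, abs_norm, inv_pow]; ring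
  rw [Finset.sum_congr rfl fun i _ => h2 i, ← Finset.mul_sum, mul_left_comm, ← div_eq_inv_mul, le_div_iff₀ (by positivity), one_mul] at h1
  exact h1

end S13
end


noncomputable section
namespace S13

lemma sampling {ι κ : Type} [Fintype ι] (P : ι → ℝ) (hP : ∀ i, 0 ≤ P i) (hP1 : ∑ i, P i = 1) (m : ℕ)
    (J : Finset κ) (g : κ → ι → ℝ) (B : κ → ℝ) (hB : ∀ j, 0 < B j) (hg0 : ∀ j i, 0 ≤ g j i)
    (hgB : ∀ j i, g j i ≤ B j)
    (hsum : ∑ j ∈ J, Real.exp (-(m * (∑ i, P i * g j i) / (4 * B j))) < 1) :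
    ∃ s : Fin m → ι, ∀ j ∈ J, m * (∑ i, P i * g j i) / 4 ≤ ∑ k, g j (s k) := by
  classical
  set E : κ → ℝ := fun j => ∑ i, P i * g j i with hE
  set F : (Fin m → ι) → ℝ := fun s => ∑ j ∈ J, Real.exp (m * E j / (4 * B j)) * ∏ k, Real.exp (-(g j (s k) / B j)) with hF
  have htot : ∑ s : Fin m → ι, ∏ k, P (s k) = 1 := by
    rw [← Fintype.sum_pow, hP1, one_pow]
  have hone : ∀ j, ∑ i, P i * Real.exp (-(g j i / B j)) ≤ Real.exp (-(E j / (2 * B j))) := by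
    intro j
    have h1 : ∀ i, P i * Real.exp (-(g j i / B j)) ≤ P i - P i * g j i / (2 * B j) := by
      intro i
      set x := g j i / B j with hx
      have hx0 : 0 ≤ x := div_nonneg (hg0 j i) (hB j).le
      have hx1 : x ≤ 1 := (div_le_one (hB j)).2 (hgB j i)
      have h2 : Real.exp (-x) ≤ 1 - x / 2 := by
        have h3 := Real.add_one_le_exp x
        rw [Real.exp_neg, inv_le_comm₀ (Real.exp_pos _) (by linarith)]
        refine le_trans ?_ h3
        rw [inv_le_iff_one_le_mul₀ (by linarith)]
        nlinarith
      have h4 : P i * g j i / (2 * B j) = P i * (x / 2) := by rw [hx]; have := (hB j).ne'; field_simp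
      rw [h4]
      nlinarith [mul_le_mul_of_nonneg_left h2 (hP i)]
    refine (Finset.sum_le_sum fun i _ => h1 i).trans ?_
    rw [Finset.sum_sub_distrib, hP1, ← Finset.sum_div]
    have := Real.add_one_le_exp (-(E j / (2 * B j)))
    linarith
  have hEF : ∑ s : Fin m → ι, (∏ k, P (s k)) * F s < 1 := by
    refine lt_of_le_of_lt ?_ hsum
    have h0 : ∑ s : Fin m → ι, (∏ k, P (s k)) * F s = ∑ j ∈ J, ∑ s : Fin m → ι, (∏ k, P (s k)) *
        (Real.exp (m * E j / (4 * B j)) * ∏ k, Real.exp (-(g j (s k) / B j))) := by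
      rw [Finset.sum_comm]
      exact Finset.sum_congr rfl fun s _ => Finset.mul_sum _ _ _
    rw [h0]
    refine Finset.sum_le_sum fun j _ => ?_
    change _ ≤ Real.exp (-(m * E j / (4 * B j)))
    clear_value E
    have h1 : ∑ s : Fin m → ι, (∏ k, P (s k)) * (Real.exp (m * E j / (4 * B j)) * ∏ k, Real.exp (-(g j (s k) / B j)))
        = Real.exp (m * E j / (4 * B j)) * (∑ i, P i * Real.exp (-(g j i / B j))) ^ m := by
      rw [Fintype.sum_pow, Finset.mul_sum]
      refine Finset.sum_congr rfl fun s _ => ?_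
      rw [Finset.prod_mul_distrib]; ring
    rw [h1]
    have h2 : (∑ i, P i * Real.exp (-(g j i / B j))) ^ m ≤ Real.exp (-(E j / (2 * B j))) ^ m :=
      pow_le_pow_left₀ (Finset.sum_nonneg fun i _ => mul_nonneg (hP i) (Real.exp_pos _).le) (hone j) m
    refine (mul_le_mul_of_nonneg_left h2 (Real.exp_pos _).le).trans (le_of_eq ?_)
    rw [← Real.exp_nat_mul, ← Real.exp_add]
    congr 1
    have := (hB j).ne'
    field_simp; ring
  have hex : ∃ s, F s < 1 := by
    by_contra hc
    push Not at hc
    have : ∑ s : Fin m → ι, (∏ k, P (s k)) ≤ ∑ s : Fin m → ι, (∏ k, P (s k)) * F s :=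
      Finset.sum_le_sum fun s _ => le_mul_of_one_le_right (Finset.prod_nonneg fun k _ => hP _) (hc s)
    linarith
  obtain ⟨s, hs⟩ := hex
  refine ⟨s, fun j hj => ?_⟩
  have h1 : Real.exp (m * E j / (4 * B j)) * ∏ k, Real.exp (-(g j (s k) / B j)) ≤ F s :=
    Finset.single_le_sum (f := fun j => Real.exp (m * E j / (4 * B j)) * ∏ k, Real.exp (-(g j (s k) / B j)))
      (fun j _ => mul_nonneg (Real.exp_pos _).le (Finset.prod_nonneg fun k _ => (Real.exp_pos _).le)) hj
  rw [← Real.exp_sum, ← Real.exp_add, Finset.sum_neg_distrib, ← Finset.sum_div] at h1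
  have h2 := Real.exp_lt_one_iff.1 (h1.trans_lt hs)
  have h3 : m * E j / (4 * B j) - (∑ k, g j (s k)) / B j = (m * E j / 4 - ∑ k, g j (s k)) / B j := by
    have := (hB j).ne'
    field_simp
  rw [← sub_eq_add_neg, h3, div_lt_iff₀ (hB j)] at h2
  linarith

def tk (k : ℕ) : ℝ := 2 ^ k / 4

lemma tk_pos (k : ℕ) : 0 < tk k := by unfold tk; positivity
lemma tk_succ (k : ℕ) : tk (k + 1) = 2 * tk k := by unfold tk; ring

/-- Each point lies in at most three of the enlarged levels. -/
lemma overlap (n : ℕ) (x : ℝ) : ∑ k ∈ Finset.range n, (if tk k / 2 < x ∧ x ≤ 5 / 2 * tk k then (1:ℝ) else 0) ≤ 3 := by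
  classical
  rw [← Finset.sum_filter, Finset.sum_const, nsmul_eq_mul, mul_one]
  set A := (Finset.range n).filter fun k => tk k / 2 < x ∧ x ≤ 5 / 2 * tk k with hA
  by_cases hne : A.Nonempty
  · set k0 := A.min' hne with hk0
    have h0 : k0 ∈ A := A.min'_mem hne
    have hsub : A ⊆ Finset.Ico k0 (k0 + 3) := by
      intro k hk
      have hle : k0 ≤ k := A.min'_le k hk
      rw [Finset.mem_Ico]
      refine ⟨hle, ?_⟩
      by_contra hc
      push Not at hc
      have h1 := (Finset.mem_filter.1 h0).2.2
      have h2 := (Finset.mem_filter.1 hk).2.1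
      have h3 : tk (k0 + 3) ≤ tk k := by
        unfold tk; gcongr; norm_num
      have h4 : tk (k0 + 3) = 8 * tk k0 := by unfold tk; ring
      have := tk_pos k0
      linarith
    have := Finset.card_le_card hsub
    rw [Nat.card_Ico] at this
    have : A.card ≤ 3 := by omega
    exact_mod_cast this
  · rw [Finset.not_nonempty_iff_eq_empty.1 hne]; simp

lemma level_exists (n : ℕ) (x : ℝ) (h0 : tk 0 < x) (hn : x ≤ tk n) :
    ∃ k ∈ Finset.range n, tk k < x ∧ x ≤ 2 * tk k := by
  classical
  have hex : ∃ j, x ≤ tk j := ⟨n, hn⟩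
  have h1 := Nat.find_spec hex
  have h2 : Nat.find hex ≤ n := Nat.find_min' hex hn
  have h3 : Nat.find hex ≠ 0 := fun h => by rw [h] at h1; linarith
  obtain ⟨k, hk⟩ := Nat.exists_eq_succ_of_ne_zero h3
  refine ⟨k, Finset.mem_range.2 (by omega), ?_, ?_⟩
  · by_contra hc
    push Not at hc
    exact Nat.find_min hex (by omega) hc
  · rw [hk, Nat.succ_eq_add_one, tk_succ] at h1; exact h1

set_option maxHeartbeats 2000000 in
lemma core {N : ℕ} {ι : Type} [Fintype ι] {Φ Ψ : ℝ → ℝ} {p q : ℝ} (h : PF Φ p q) (K : ℝ) (hK0 : 0 < K)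
    (hΨm : MonotoneOn Ψ (Set.Ici 0)) (hΨp : ∀ t, 0 < t → 0 < Ψ t)
    (hK : ∀ t s, 0 < t → 0 < s → Φ (t * s) ≤ K * (Φ t * Ψ s))
    (b : ι → EE N) (hb : ∀ i, b i ≠ 0) (μ : ι → ℝ) (hμ : ∀ i, 0 < μ i) (hμ1 : ∑ i, μ i = 1)
    (hν1 : ∑ i, μ i * Φ ‖b i‖ ≤ 1) (D r : ℝ) (hrp : r ≤ p)
    (hset : Setup (fun i => (‖b i‖)⁻¹ • b i) (fun i => μ i * Φ ‖b i‖) D r)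
    (L : ℝ) (hL : 1 ≤ L) (hSB : SB (fun i => (‖b i‖)⁻¹ • b i) L)
    (n : ℕ) (hn : 16 * D ≤ tk n ^ r) (m : ℕ) (hm1 : 1 ≤ m)
    (hm : ∀ k < n, 160 * (D * L * (tk k / 4) ^ (-r)) + 2 * n ≤ m * (((2 ^ q)⁻¹ / (4 * n)) / (4 * (2 * K * Ψ (3 * tk k))))) :
    ∃ (s : Fin m → ι) (lam : Fin m → ℝ), (∀ j, 0 < lam j) ∧ ∑ j, lam j = 1 ∧
      ∀ z, ∑ i, μ i * Φ |inner ℝ z (b i)| = 1 →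
        (2 ^ q)⁻¹ * (2 ^ q)⁻¹ / 48 ≤ ∑ j, lam j * Φ |inner ℝ z (b (s j))| := by
  classical
  set e : ι → EE N := fun i => (‖b i‖)⁻¹ • b i with he
  set ν : ι → ℝ := fun i => μ i * Φ ‖b i‖ with hν
  have hv : ∀ i, 0 < ‖b i‖ := fun i => norm_pos_iff.2 (hb i)
  have hν0 : ∀ i, 0 < ν i := fun i => mul_pos (hμ i) (h.pos _ (hv i))
  have hin : ∀ (z : EE N) i, |inner ℝ z (b i)| = ‖b i‖ * |inner ℝ z (e i)| := fun z i => by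
    rw [he]; simp only; rw [real_inner_smul_right, abs_mul, abs_inv, abs_norm, mul_inv_cancel_left₀ (hv i).ne']
  have hn0 : n ≠ 0 := by
    rintro rfl
    have : tk 0 ^ r ≤ 1 := Real.rpow_le_one (tk_pos 0).le (by unfold tk; norm_num) (by linarith [hset.hr1])
    linarith [hset.hD]
  have hn1 : (1:ℝ) ≤ n := by exact_mod_cast Nat.one_le_iff_ne_zero.2 hn0
  set Q : ℝ := (2:ℝ) ^ q with hQ
  have hQ0 : 0 < Q := by positivity
  have hdbl : ∀ x y : ℝ, 0 ≤ x → 0 ≤ y → x ≤ 2 * y → Φ x ≤ Q * Φ y := fun x y hx hy hxy =>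
    (h.mono hx (show (0:ℝ) ≤ 2 * y by positivity) hxy).trans (h.dec 2 y (by norm_num) hy)
  -- the sampling density
  set sν := ∑ i, ν i with hsν
  have hsν0 : 0 ≤ sν := Finset.sum_nonneg fun i _ => (hν0 i).le
  set P : ι → ℝ := fun i => (ν i + μ i) / (1 + sν) with hP
  have hP0 : ∀ i, 0 < P i := fun i => div_pos (add_pos (hν0 i) (hμ i)) (by linarith)
  have hP1 : ∑ i, P i = 1 := by
    rw [hP, ← Finset.sum_div, Finset.sum_add_distrib, hμ1, add_comm, div_self (by linarith)]
  have hPν : ∀ i, ν i ≤ 2 * P i := fun i => by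
    rw [hP]; simp only
    rw [← mul_div_assoc, le_div_iff₀ (by linarith)]; nlinarith [hν0 i, hμ i]
  have hPμ : ∀ i, μ i ≤ 2 * P i := fun i => by
    rw [hP]; simp only
    rw [← mul_div_assoc, le_div_iff₀ (by linarith)]; nlinarith [hν0 i, hμ i]
  set R : ι → ℝ := fun i => μ i / P i with hR
  have hR0 : ∀ i, 0 < R i := fun i => div_pos (hμ i) (hP0 i)
  have hR2 : ∀ i, R i ≤ 2 := fun i => (div_le_iff₀ (hP0 i)).2 (hPμ i)
  have hRΦ : ∀ i, R i * Φ ‖b i‖ ≤ 2 := fun i => by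
    rw [hR]; simp only; rw [div_mul_eq_mul_div, div_le_iff₀ (hP0 i)]; exact hPν i
  have hPR : ∀ i, P i * R i = μ i := fun i => by rw [hR]; simp only; rw [mul_div_cancel₀ _ (hP0 i).ne']
  -- nets
  have hnet : ∀ k : ℕ, ∃ S : Finset (EE N), (S.card : ℝ) ≤ Real.exp (160 * (D * L * (tk k / 4) ^ (-r))) ∧
      ∀ z, ∑ i, ν i * |inner ℝ z (e i)| ^ r ≤ 2 → ∃ c ∈ S, ∀ i, |inner ℝ (z - c) (e i)| ≤ tk k / 4 :=
    fun k => hset.net hL hSB _ (by have := tk_pos k; positivity)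
  choose S hS1 hS2 using hnet
  -- the functions
  let g : ℕ × EE N → ι → ℝ := fun j i =>
    if 3/4 * tk j.1 < |inner ℝ j.2 (e i)| ∧ |inner ℝ j.2 (e i)| ≤ 9/4 * tk j.1 then
      R i * Φ (‖b i‖ * |inner ℝ j.2 (e i)|) else 0
  let B : ℕ × EE N → ℝ := fun j => 2 * K * Ψ (3 * tk j.1)
  have hB0 : ∀ j, 0 < B j := fun j => by
    have := hΨp (3 * tk j.1) (by have := tk_pos j.1; positivity)
    show 0 < 2 * K * Ψ (3 * tk j.1)
    positivity
  have hg0 : ∀ j i, 0 ≤ g j i := fun j i => by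
    show 0 ≤ ite _ _ _
    split_ifs
    · exact mul_nonneg (hR0 i).le (h.nonneg _ (by positivity))
    · exact le_rfl
  have hgB : ∀ j i, g j i ≤ B j := fun j i => by
    show ite _ _ _ ≤ _
    split_ifs with hc
    · have ht := tk_pos j.1
      have hx : 0 < |inner ℝ j.2 (e i)| := by linarith [hc.1]
      have h1 := hK ‖b i‖ _ (hv i) hx
      have h2 : Ψ |inner ℝ j.2 (e i)| ≤ Ψ (3 * tk j.1) := hΨm hx.le (show (0:ℝ) ≤ 3 * tk j.1 by positivity) (by linarith [hc.2])
      have h3 := hRΦ i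
      have h4 := hΨp _ hx
      calc R i * Φ (‖b i‖ * |inner ℝ j.2 (e i)|) ≤ R i * (K * (Φ ‖b i‖ * Ψ |inner ℝ j.2 (e i)|)) :=
            mul_le_mul_of_nonneg_left h1 (hR0 i).le
        _ = K * (R i * Φ ‖b i‖) * Ψ |inner ℝ j.2 (e i)| := by ring
        _ ≤ K * 2 * Ψ (3 * tk j.1) := by gcongr
        _ = B j := by show _ = 2 * K * Ψ (3 * tk j.1); ring
    · exact (hB0 j).le
  set δ : ℝ := Q⁻¹ / (4 * n) with hδ
  let J : Finset (ℕ × EE N) := ((Finset.range n).biUnion fun k => (S k).image fun c => (k, c)).filter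
    fun j => δ ≤ ∑ i, P i * g j i
  have hsum : ∑ j ∈ J, Real.exp (-(m * (∑ i, P i * g j i) / (4 * B j))) < 1 := by
    have h1 : ∑ j ∈ J, Real.exp (-(m * (∑ i, P i * g j i) / (4 * B j))) ≤
        ∑ j ∈ J, Real.exp (-(m * (δ / (4 * B j)))) := by
      refine Finset.sum_le_sum fun j hj => Real.exp_le_exp.2 ?_
      have := (Finset.mem_filter.1 hj).2
      have hBj := hB0 j
      rw [neg_le_neg_iff, mul_div_assoc]
      gcongr
    have h2 : ∑ j ∈ J, Real.exp (-(m * (δ / (4 * B j)))) ≤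
        ∑ k ∈ Finset.range n, ∑ c ∈ S k, Real.exp (-(m * (δ / (4 * B (k, c))))) := by
      refine (Finset.sum_le_sum_of_subset_of_nonneg (Finset.filter_subset _ _) (fun _ _ _ => (Real.exp_pos _).le)).trans ?_
      rw [Finset.sum_biUnion]
      · refine Finset.sum_le_sum fun k _ => ?_
        rw [Finset.sum_image]
        intro c _ c' _ hcc
        exact (Prod.mk.inj hcc).2
      · intro k _ k' _ hkk
        rw [Function.onFun, Finset.disjoint_left]
        intro j hj hj'
        obtain ⟨c, _, hc⟩ := Finset.mem_image.1 hj
        obtain ⟨c', _, hc'⟩ := Finset.mem_image.1 hj'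
        exact hkk (by rw [← hc'] at hc; exact (Prod.mk.inj hc).1)
    have h3 : ∀ k ∈ Finset.range n, ∑ c ∈ S k, Real.exp (-(m * (δ / (4 * B (k, c))))) ≤ Real.exp (-(2 * n)) := by
      intro k hk
      show ∑ c ∈ S k, Real.exp (-(m * (δ / (4 * (2 * K * Ψ (3 * tk k)))))) ≤ _
      rw [Finset.sum_const, nsmul_eq_mul]
      have := hm k (Finset.mem_range.1 hk)
      refine (mul_le_mul_of_nonneg_right (hS1 k) (Real.exp_pos _).le).trans ?_
      rw [← Real.exp_add]
      exact Real.exp_le_exp.2 (by linarith)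
    have h4 := h1.trans (h2.trans (Finset.sum_le_sum h3))
    rw [Finset.sum_const, nsmul_eq_mul, Finset.card_range] at h4
    refine lt_of_le_of_lt h4 ?_
    have h5 := Real.add_one_le_exp (2 * (n:ℝ))
    rw [Real.exp_neg, ← div_eq_mul_inv, div_lt_one (Real.exp_pos _)]
    linarith
  obtain ⟨s, hs⟩ := sampling P (fun i => (hP0 i).le) hP1 m J g B hB0 hg0 hgB hsum
  have hm0 : (0:ℝ) < m := by exact_mod_cast hm1
  set W := ∑ j, R (s j) with hW
  have hW0 : 0 < W := by
    have : Nonempty (Fin m) := ⟨⟨0, hm1⟩⟩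
    exact Finset.sum_pos (fun j _ => hR0 _) Finset.univ_nonempty
  have hW2 : W ≤ 2 * m := by
    refine (Finset.sum_le_sum fun j _ => hR2 (s j)).trans ?_
    simp [mul_comm]
  refine ⟨s, fun j => R (s j) / W, fun j => div_pos (hR0 _) hW0, ?_, ?_⟩
  · rw [← Finset.sum_div, div_self hW0.ne']
  intro z hz
  simp only [hin] at hz ⊢
  set G : ι → ℝ := fun i => |inner ℝ z (e i)| with hG
  have hG0 : ∀ i, 0 ≤ G i := fun i => abs_nonneg _
  have hT0 : ∀ i, 0 ≤ μ i * Φ (‖b i‖ * G i) := fun i => mul_nonneg (hμ i).le (h.nonneg _ (mul_nonneg (hv i).le (hG0 i)))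
  have hz : ∑ i, μ i * Φ (‖b i‖ * G i) = 1 := hz
  have hGr : ∑ i, ν i * |inner ℝ z (e i)| ^ r ≤ 2 := by
    have : ∀ i, ν i * |inner ℝ z (e i)| ^ r ≤ ν i + μ i * Φ (‖b i‖ * G i) := by
      intro i
      by_cases h1 : G i ≤ 1
      · have : G i ^ r ≤ 1 := Real.rpow_le_one (hG0 i) h1 (by linarith [hset.hr1])
        have := mul_le_of_le_one_right (hν0 i).le this
        have := hT0 i
        linarith
      · push Not at h1
        have h2 : G i ^ r ≤ G i ^ p := Real.rpow_le_rpow_of_exponent_le h1.le hrp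
        have h3 := h.inc (G i) ‖b i‖ h1.le (norm_nonneg _)
        have h4 : ν i * G i ^ r ≤ μ i * Φ (‖b i‖ * G i) := by
          rw [mul_comm ‖b i‖]
          calc ν i * G i ^ r ≤ ν i * G i ^ p := mul_le_mul_of_nonneg_left h2 (hν0 i).le
            _ = μ i * (G i ^ p * Φ ‖b i‖) := by rw [hν]; ring
            _ ≤ _ := mul_le_mul_of_nonneg_left h3 (hμ i).le
        have := hν0 i
        linarith
    refine (Finset.sum_le_sum fun i _ => this i).trans ?_
    rw [Finset.sum_add_distrib, hz]; linarith
  have hGn : ∀ i, G i ≤ tk n := by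
    intro i
    have h1 := hset.sup_le z (hGr.trans (by norm_num))
    have h2 := hset.inner_le z i
    by_contra hc
    push Not at hc
    have : tk n ^ r < ‖z‖ ^ r := Real.rpow_lt_rpow (tk_pos n).le (hc.trans_le h2) (by linarith [hset.hr1])
    linarith
  have hc := fun k => hS2 k z hGr
  choose c hcS hcn using hc
  -- comparison
  have hcmp : ∀ k i, abs (G i - abs (inner ℝ (c k) (e i))) ≤ tk k / 4 := fun k i => by
    refine le_trans (abs_abs_sub_abs_le _ _) ?_
    rw [← inner_sub_left]; exact hcn k i
  set E : ℕ → ℝ := fun k => ∑ i, P i * g (k, c k) i with hE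
  have hpt : ∀ i, μ i * Φ (‖b i‖ * G i) ≤ ν i / 4 + ∑ k ∈ Finset.range n, Q * (P i * g (k, c k) i) := by
    intro i
    have hnn : ∀ k ∈ Finset.range n, 0 ≤ Q * (P i * g (k, c k) i) := fun k _ =>
      mul_nonneg hQ0.le (mul_nonneg (hP0 i).le (hg0 _ _))
    by_cases h1 : G i ≤ tk 0
    · have h2 := h.small (1/4) ‖b i‖ (by norm_num) (by norm_num) (norm_nonneg _)
      have h3 : Φ (‖b i‖ * G i) ≤ Φ (1/4 * ‖b i‖) := by
        apply h.mono (mul_nonneg (hv i).le (hG0 i)) (show (0:ℝ) ≤ 1/4 * ‖b i‖ by positivity)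
        have : tk 0 = 1/4 := by unfold tk; norm_num
        rw [this] at h1
        nlinarith [hv i]
      have h4 := mul_le_mul_of_nonneg_left (h3.trans h2) (hμ i).le
      have h5 := Finset.sum_nonneg hnn
      have : ν i / 4 = μ i * (1/4 * Φ ‖b i‖) := by rw [hν]; ring
      linarith
    · push Not at h1
      obtain ⟨k, hk, hk1, hk2⟩ := level_exists n (G i) h1 (hGn i)
      have h2 := Finset.single_le_sum hnn hk
      have h3 := abs_le.1 (hcmp k i)
      have ht := tk_pos k
      have hcond : 3/4 * tk k < |inner ℝ (c k) (e i)| ∧ |inner ℝ (c k) (e i)| ≤ 9/4 * tk k := by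
        constructor <;> linarith [h3.1, h3.2]
      have h4 : g (k, c k) i = R i * Φ (‖b i‖ * |inner ℝ (c k) (e i)|) := if_pos hcond
      have h5 : Q * (P i * g (k, c k) i) = μ i * (Q * Φ (‖b i‖ * |inner ℝ (c k) (e i)|)) := by
        rw [h4, ← mul_assoc (P i), hPR]; ring
      have h6 : Φ (‖b i‖ * G i) ≤ Q * Φ (‖b i‖ * |inner ℝ (c k) (e i)|) := by
        apply hdbl _ _ (mul_nonneg (hv i).le (hG0 i)) (by positivity)
        have : G i ≤ 2 * |inner ℝ (c k) (e i)| := by linarith [h3.2, hcond.1]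
        nlinarith [hv i]
      have h7 := mul_le_mul_of_nonneg_left h6 (hμ i).le
      have := hν0 i
      linarith
  have hEsum : 3/4 * Q⁻¹ ≤ ∑ k ∈ Finset.range n, E k := by
    have h1 := Finset.sum_le_sum (s := Finset.univ) fun i _ => hpt i
    rw [hz, Finset.sum_add_distrib, ← Finset.sum_div, Finset.sum_comm] at h1
    simp only [← Finset.mul_sum] at h1
    have h2 : ∑ i, ν i / 1 ≤ 1 := by simpa using hν1
    have h3 : (3/4 : ℝ) ≤ Q * ∑ k ∈ Finset.range n, E k := by
      have : sν ≤ 1 := hν1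
      have h4 : (1:ℝ) ≤ sν / 4 + Q * ∑ k ∈ Finset.range n, E k := h1
      linarith
    rw [← div_eq_mul_inv, div_le_iff₀ hQ0]; linarith
  have hemp : ∀ k ∈ Finset.range n, m / 4 * (E k - δ) ≤ ∑ j, g (k, c k) (s j) := by
    intro k hk
    by_cases h1 : δ ≤ E k
    · have hJ : (k, c k) ∈ J := by
        refine Finset.mem_filter.2 ⟨Finset.mem_biUnion.2 ⟨k, hk, Finset.mem_image.2 ⟨c k, hcS k, rfl⟩⟩, h1⟩
      have h2 := hs _ hJ
      have h3 : (m:ℝ) * E k / 4 ≤ ∑ j, g (k, c k) (s j) := h2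
      have hδ0 : 0 ≤ δ := by positivity
      have := mul_nonneg hm0.le hδ0
      linarith
    · push Not at h1
      have h2 : 0 ≤ ∑ j, g (k, c k) (s j) := Finset.sum_nonneg fun j _ => hg0 _ _
      nlinarith
  have hemps := Finset.sum_le_sum hemp
  rw [← Finset.mul_sum, Finset.sum_sub_distrib, Finset.sum_const, nsmul_eq_mul, Finset.card_range] at hemps
  have hnδ : (n:ℝ) * δ = Q⁻¹ / 4 := by rw [hδ]; field_simp
  rw [hnδ] at hemps
  have hup : ∀ i, ∑ k ∈ Finset.range n, g (k, c k) i ≤ 3 * Q * (R i * Φ (‖b i‖ * G i)) := by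
    intro i
    have hX : 0 ≤ Q * (R i * Φ (‖b i‖ * G i)) := mul_nonneg hQ0.le (mul_nonneg (hR0 i).le (h.nonneg _ (mul_nonneg (hv i).le (hG0 i))))
    have h1 : ∀ k ∈ Finset.range n, g (k, c k) i ≤ (if tk k / 2 < G i ∧ G i ≤ 5 / 2 * tk k then (1:ℝ) else 0) * (Q * (R i * Φ (‖b i‖ * G i))) := by
      intro k _
      have h3 := abs_le.1 (hcmp k i)
      have ht := tk_pos k
      show ite (3/4 * tk k < |inner ℝ (c k) (e i)| ∧ |inner ℝ (c k) (e i)| ≤ 9/4 * tk k) _ _ ≤ _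
      split_ifs with hA hBB hBB
      · have h6 : Φ (‖b i‖ * |inner ℝ (c k) (e i)|) ≤ Q * Φ (‖b i‖ * G i) := by
          apply hdbl _ _ (by positivity) (mul_nonneg (hv i).le (hG0 i))
          have : |inner ℝ (c k) (e i)| ≤ 2 * G i := by linarith [h3.1, hBB.1]
          nlinarith [hv i]
        have := mul_le_mul_of_nonneg_left h6 (hR0 i).le
        rw [one_mul]; linarith
      · exfalso; apply hBB
        constructor <;> linarith [h3.1, h3.2, hA.1, hA.2]
      · rw [one_mul]; exact hX
      · rw [zero_mul]
    refine (Finset.sum_le_sum h1).trans ?_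
    rw [← Finset.sum_mul]
    have := mul_le_mul_of_nonneg_right (overlap n (G i)) hX
    linarith
  have hfin : m / 4 * (Q⁻¹ / 2) ≤ 3 * Q * ∑ j, R (s j) * Φ (‖b (s j)‖ * G (s j)) := by
    rw [Finset.mul_sum]
    refine le_trans ?_ (Finset.sum_le_sum fun j _ => hup (s j))
    rw [Finset.sum_comm]
    refine le_trans ?_ hemps
    refine mul_le_mul_of_nonneg_left ?_ (by positivity)
    linarith
  have hlast : ∑ j, R (s j) / W * Φ (‖b (s j)‖ * |inner ℝ z (e (s j))|) = (∑ j, R (s j) * Φ (‖b (s j)‖ * G (s j))) / W := by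
    rw [Finset.sum_div]
    exact Finset.sum_congr rfl fun j _ => by rw [div_mul_eq_mul_div]
  rw [hlast, le_div_iff₀ hW0]
  set Y := ∑ j, R (s j) * Φ (‖b (s j)‖ * G (s j)) with hY
  have h9 : m * (Q⁻¹ * Q⁻¹) / 24 ≤ Y := by
    have := mul_le_mul_of_nonneg_left hfin (inv_pos.2 hQ0).le
    have e1 : Q⁻¹ * (3 * Q * Y) = 3 * Y := by field_simp
    rw [e1] at this
    linarith
  have h10 : Q⁻¹ * Q⁻¹ / 48 * W ≤ Q⁻¹ * Q⁻¹ / 48 * (2 * m) := mul_le_mul_of_nonneg_left hW2 (by positivity)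
  linarith

end S13
end


noncomputable section
namespace S13

structure PS (Ψ : ℝ → ℝ) (p q a : ℝ) : Prop where
  ha : 1 ≤ a
  mono : MonotoneOn Ψ (Set.Ici 0)
  pos : ∀ t, 0 < t → 0 < Ψ t
  ainc : ∀ s t, 0 < s → s ≤ t → Ψ s ≤ a * Ψ t * (s / t) ^ p
  dec : ∀ s t, 1 ≤ s → 0 < t → Ψ (s * t) ≤ s ^ q * Ψ t

def ell (N : ℕ) : ℝ := Real.logb 2 (2 * N)

lemma ell_eq {N : ℕ} (hN : 1 ≤ N) : ell N = 1 + Real.logb 2 N := by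
  have : (N:ℝ) ≠ 0 := by positivity
  unfold ell
  rw [Real.logb_mul (by norm_num) this, Real.logb_self_eq_one (by norm_num)]

lemma ell_ge {N : ℕ} (hN : 1 ≤ N) : 1 ≤ ell N := by
  rw [ell_eq hN]
  have : 0 ≤ Real.logb 2 (N:ℝ) := Real.logb_nonneg (by norm_num) (by exact_mod_cast hN)
  linarith

set_option maxHeartbeats 2000000 in
lemma numeric {Ψ : ℝ → ℝ} {p q a : ℝ} (h : PS Ψ p q a) (hp : 1 < p) (hq : 2 ≤ q) (K : ℝ) (hK : 0 < K) :
    ∃ C5 : ℝ, 0 < C5 ∧ ∀ (N : ℕ), 1 ≤ N → ∀ L : ℝ, ell N ≤ L →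
      ∃ n m : ℕ, 1 ≤ m ∧ (m : ℝ) ≤ C5 * Ψ ((N:ℝ) ^ (1 / min p 2)) * ell N * L ∧
        16 * (3 * 2 ^ q * N) ≤ tk n ^ (min p 2) ∧
        ∀ k < n, 160 * ((3 * 2 ^ q * N) * L * (tk k / 4) ^ (-(min p 2))) + 2 * n ≤
          m * (((2 ^ q)⁻¹ / (4 * n)) / (4 * (2 * K * Ψ (3 * tk k)))) := by
  set r := min p 2 with hr
  have hr1 : 1 ≤ r := le_min hp.le (by norm_num)
  have hr2 : r ≤ 2 := min_le_right _ _
  have hrp : r ≤ p := min_le_left _ _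
  set Q : ℝ := 2 ^ q with hQ
  have hQ1 : 1 ≤ Q := Real.one_le_rpow (by norm_num) (by linarith)
  set A : ℝ := 48 * Q with hA
  have hA1 : 1 ≤ A := by linarith
  set B : ℝ := a + A ^ q with hB
  have hB0 : 0 < B := by have := h.ha; positivity
  set C0 : ℝ := 32 * (9 + q) * K * Q * 3 ^ q * (7680 * Q * B + 2 * (9 + q) * A ^ q) with hC0
  have hC00 : 0 < C0 := by positivity
  have hΨ1 := h.pos 1 one_pos
  refine ⟨C0 + (Ψ 1)⁻¹, by positivity, ?_⟩
  intro N hN L hL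
  have hN1 : (1:ℝ) ≤ N := by exact_mod_cast hN
  have hN0 : (0:ℝ) < N := by linarith
  set T : ℝ := (N:ℝ) ^ (1 / r) with hT
  have hT1 : 1 ≤ T := Real.one_le_rpow hN1 (by positivity)
  have hT0 : 0 < T := by linarith
  have hTr : T ^ r = N := by
    rw [hT, ← Real.rpow_mul hN0.le, one_div_mul_cancel (by linarith), Real.rpow_one]
  have hl := ell_ge hN
  set l := ell N with hl'
  have hL1 : 1 ≤ L := hl.trans hL
  have hΨT : 0 < Ψ T := h.pos T hT0
  have hΨ1T : Ψ 1 ≤ Ψ T := h.mono (by simp) hT0.le hT1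
  have hex : ∃ n, 16 * (3 * Q * N) ≤ tk n ^ r := by
    obtain ⟨n, hn⟩ := pow_unbounded_of_one_lt (4 * (16 * (3 * Q * N))) (one_lt_two : (1:ℝ) < 2)
    have h1 : 16 * (3 * Q * N) ≤ tk n := by unfold tk; linarith
    have h2 : 1 ≤ tk n := by nlinarith
    refine ⟨n, h1.trans ?_⟩
    simpa using Real.rpow_le_rpow_of_exponent_le h2 hr1
  classical
  set n := Nat.find hex with hn
  have hns := Nat.find_spec hex
  have hnk : ∀ k < n, tk k ^ r < A * N := fun k hk => by
    have := Nat.find_min hex hk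
    push Not at this
    rw [hA]; linarith
  have hkT : ∀ k < n, tk k ≤ A * T := fun k hk => by
    by_contra hc
    push Not at hc
    have h1 : (A * T) ^ r ≤ tk k ^ r := Real.rpow_le_rpow (by positivity) hc.le (by linarith)
    rw [Real.mul_rpow (by positivity) hT0.le, hTr] at h1
    have h2 : A ≤ A ^ r := by simpa using Real.rpow_le_rpow_of_exponent_le hA1 hr1
    have := hnk k hk
    nlinarith
  have hnl : (n:ℝ) ≤ (9 + q) * l := by
    rcases Nat.eq_zero_or_pos n with h0 | h0
    · rw [h0]; simp; positivity
    · have h1 := hnk (n-1) (by omega)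
      have h2 : tk (n-1) < A * N := by
        by_cases h3 : 1 ≤ tk (n-1)
        · refine lt_of_le_of_lt ?_ h1
          simpa using Real.rpow_le_rpow_of_exponent_le h3 hr1
        · push Not at h3; nlinarith
      have h4 : (2:ℝ) ^ (n - 1) < 2 ^ ((8:ℝ) + q) * N := by
        have e1 : (2:ℝ) ^ ((8:ℝ) + q) = 256 * Q := by
          rw [Real.rpow_add (by norm_num), hQ]; norm_num
        rw [e1]
        unfold tk at h2
        have : 0 < Q * N := by positivity
        rw [hA] at h2
        nlinarith
      have h5 := Real.logb_lt_logb (b := 2) (by norm_num) (by positivity) h4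
      rw [Real.logb_mul (by positivity) (by positivity), Real.logb_rpow (by norm_num) (by norm_num),
        Real.logb_pow, Real.logb_self_eq_one (by norm_num), mul_one, Nat.cast_sub h0] at h5
      have h6 := ell_eq hN
      rw [← hl'] at h6
      push_cast at h5
      nlinarith
  have hΨA : ∀ k < n, Ψ (tk k) ≤ A ^ q * Ψ T := fun k hk =>
    (h.mono (tk_pos k).le (show (0:ℝ) ≤ A * T by positivity) (hkT k hk)).trans (h.dec A T hA1 hT0)
  have hclaim : ∀ k < n, N * (tk k) ^ (-r) * Ψ (tk k) ≤ B * Ψ T := fun k hk => by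
    have ht := tk_pos k
    have htr : 0 < tk k ^ r := by positivity
    have hAq : 0 < A ^ q * Ψ T := by positivity
    have haT : 0 < a * Ψ T := by have := h.ha; positivity
    rw [Real.rpow_neg ht.le, ← div_eq_mul_inv, div_mul_eq_mul_div, div_le_iff₀ htr, hB]
    by_cases hc : tk k ≤ T
    · have h1 := h.ainc _ _ ht hc
      have h2 : (tk k / T) ^ p ≤ (tk k / T) ^ r :=
        Real.rpow_le_rpow_of_exponent_ge (by positivity) ((div_le_one hT0).2 hc) hrp
      rw [Real.div_rpow ht.le hT0.le r, hTr] at h2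
      have h3 : Ψ (tk k) ≤ a * Ψ T * (tk k ^ r / N) := h1.trans (mul_le_mul_of_nonneg_left h2 haT.le)
      have h4 := mul_le_mul_of_nonneg_left h3 hN0.le
      have h5 : N * (a * Ψ T * (tk k ^ r / N)) = a * Ψ T * tk k ^ r := by field_simp
      rw [h5] at h4
      linarith [mul_pos hAq htr]
    · push Not at hc
      have h1 : (N:ℝ) ≤ tk k ^ r := by rw [← hTr]; exact Real.rpow_le_rpow hT0.le hc.le (by linarith)
      have h2 := hΨA k hk
      have := h.pos _ ht
      calc N * Ψ (tk k) ≤ tk k ^ r * (A ^ q * Ψ T) := by gcongr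
        _ ≤ _ := by linarith [mul_pos haT htr]
  set m := ⌈C0 * Ψ T * l * L⌉₊ with hm
  have hX0 : 0 < C0 * Ψ T * l * L := by positivity
  refine ⟨n, m, Nat.one_le_iff_ne_zero.2 (Nat.ceil_pos.2 hX0).ne', ?_, hns, ?_⟩
  · have h1 := (Nat.ceil_lt_add_one hX0.le).le
    refine h1.trans ?_
    have h2 : 1 ≤ (Ψ 1)⁻¹ * Ψ T := by rw [inv_mul_eq_div, one_le_div hΨ1]; exact hΨ1T
    have h3 : 1 ≤ l * L := by nlinarith
    have h4 : 1 ≤ (Ψ 1)⁻¹ * Ψ T * (l * L) := by nlinarith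
    nlinarith
  · intro k hk
    have ht := tk_pos k
    have hn0 : (0:ℝ) < n := by
      have : 0 < n := by omega
      exact_mod_cast this
    have hΨt := h.pos _ ht
    have h3t := h.dec 3 (tk k) (by norm_num) ht
    have hP3 := h.pos (3 * tk k) (by positivity)
    have e1 : (tk k / 4) ^ (-r) ≤ 16 * tk k ^ (-r) := by
      rw [Real.div_rpow ht.le (by norm_num), Real.rpow_neg (by norm_num : (0:ℝ) ≤ 4), div_inv_eq_mul, mul_comm]
      have : (4:ℝ) ^ r ≤ 16 := by
        have := Real.rpow_le_rpow_of_exponent_le (by norm_num : (1:ℝ) ≤ 4) hr2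
        norm_num at this
        exact this
      gcongr
    have e2 : m * ((Q⁻¹ / (4 * n)) / (4 * (2 * K * Ψ (3 * tk k)))) = m / (32 * n * K * Q * Ψ (3 * tk k)) := by
      field_simp
      ring
    rw [e2, le_div_iff₀ (by positivity)]
    refine le_trans ?_ (Nat.le_ceil (C0 * Ψ T * l * L))
    have f1 : 160 * (3 * Q * N * L * (tk k / 4) ^ (-r)) * Ψ (3 * tk k) ≤ 7680 * Q * B * 3 ^ q * (Ψ T * L) := by
      calc 160 * (3 * Q * N * L * (tk k / 4) ^ (-r)) * Ψ (3 * tk k)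
          ≤ 160 * (3 * Q * N * L * (16 * tk k ^ (-r))) * (3 ^ q * Ψ (tk k)) := by gcongr
        _ = 7680 * Q * L * 3 ^ q * (N * tk k ^ (-r) * Ψ (tk k)) := by ring
        _ ≤ 7680 * Q * L * 3 ^ q * (B * Ψ T) := mul_le_mul_of_nonneg_left (hclaim k hk) (by positivity)
        _ = _ := by ring
    have f2 : 2 * n * Ψ (3 * tk k) ≤ 2 * (9 + q) * A ^ q * 3 ^ q * (Ψ T * L) := by
      calc 2 * n * Ψ (3 * tk k) ≤ 2 * ((9 + q) * L) * (3 ^ q * (A ^ q * Ψ T)) := by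
            gcongr
            · exact hnl.trans (by gcongr)
            · exact h3t.trans (by gcongr; exact hΨA k hk)
        _ = _ := by ring
    calc (160 * (3 * Q * N * L * (tk k / 4) ^ (-r)) + 2 * n) * (32 * n * K * Q * Ψ (3 * tk k))
        = 32 * n * K * Q * (160 * (3 * Q * N * L * (tk k / 4) ^ (-r)) * Ψ (3 * tk k) + 2 * n * Ψ (3 * tk k)) := by ring
      _ ≤ 32 * ((9 + q) * l) * K * Q * (7680 * Q * B * 3 ^ q * (Ψ T * L) + 2 * (9 + q) * A ^ q * 3 ^ q * (Ψ T * L)) := by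
          gcongr
      _ = C0 * Ψ T * l * L := by rw [hC0]; ring

end S13
end


noncomputable section
namespace S13

lemma PF.contAbs {Φ : ℝ → ℝ} {p q : ℝ} (h : PF Φ p q) : Continuous fun x : ℝ => Φ |x| :=
  h.cont.comp_continuous continuous_abs fun _ => Set.mem_Ici.2 (abs_nonneg _)

lemma finthm {Φ Ψ : ℝ → ℝ} {p q a : ℝ} (h : PF Φ p q) (hΨ : PS Ψ p q a) (K : ℝ) (hK0 : 0 < K)
    (hK : ∀ t s, 0 < t → 0 < s → Φ (t * s) ≤ K * (Φ t * Ψ s)) :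
    ∃ C5 : ℝ, 0 < C5 ∧ ∀ (N : ℕ), 1 ≤ N → ∀ (ι : Type) [Fintype ι] (a : ι → EE N) (μ : ι → ℝ),
      (∀ i, 0 < μ i) → ∑ i, μ i = 1 → (∀ z : EE N, (∀ i, inner ℝ z (a i) = 0) → z = 0) → (∀ i, a i ≠ 0) →
      ∀ L : ℝ, ell N ≤ L → (∀ e : ι → EE N, (∀ i, ‖e i‖ ≤ 1) → SB e L) →
      ∃ (m : ℕ) (s : Fin m → ι) (lam : Fin m → ℝ), 1 ≤ m ∧
        (m : ℝ) ≤ C5 * Ψ ((N:ℝ) ^ (1 / min p 2)) * ell N * L ∧ (∀ j, 0 < lam j) ∧ ∑ j, lam j = 1 ∧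
        ∀ z, 1 ≤ ∑ i, μ i * Φ |inner ℝ z (a i)| →
          (2 ^ q)⁻¹ * (2 ^ q)⁻¹ / 48 ≤ ∑ j, lam j * Φ |inner ℝ z (a (s j))| := by
  obtain ⟨C5, hC5, hnum⟩ := numeric hΨ h.hp h.hq K hK0
  refine ⟨C5, hC5, ?_⟩
  intro N hN ι _ a μ hμ hμ1 hspan ha L hL hSB
  obtain ⟨n, m, hm1, hmC, hn, hm⟩ := hnum N hN L hL
  have hr1 : 1 ≤ min p 2 := le_min h.hp.le (by norm_num)
  obtain ⟨b, hb, hab, hν1, hset⟩ := lewis h hN a μ hμ hμ1 hspan ha (min p 2) hr1 (min_le_right _ _)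
  obtain ⟨s, lam, hlam, hlam1, hmain⟩ := core h K hK0 hΨ.mono hΨ.pos hK b hb μ hμ hμ1 hν1 _ _
    (min_le_left _ _) hset L ((ell_ge hN).trans hL) (hSB _ hset.he) n hn m hm1 hm
  refine ⟨m, s, lam, hm1, hmC, hlam, hlam1, ?_⟩
  intro z hz
  obtain ⟨z', hz'⟩ := hab z
  simp only [hz'] at hz ⊢
  set S : ℝ → ℝ := fun t => ∑ i, μ i * Φ |inner ℝ (t • z') (b i)| with hS
  have hSc : Continuous S := by
    refine continuous_finsetSum _ fun i _ => continuous_const.mul (h.contAbs.comp ?_)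
    fun_prop
  have hS0 : S 0 = 0 := by simp [hS, h.map_zero]
  have hS1 : 1 ≤ S 1 := by simpa [hS] using hz
  obtain ⟨t, ht, hSt⟩ := intermediate_value_Icc (zero_le_one) hSc.continuousOn (show (1:ℝ) ∈ Set.Icc (S 0) (S 1) from ⟨by rw [hS0]; norm_num, hS1⟩)
  refine (hmain _ hSt).trans (Finset.sum_le_sum fun j _ => mul_le_mul_of_nonneg_left ?_ (hlam j).le)
  apply h.mono (Set.mem_Ici.2 (abs_nonneg _)) (Set.mem_Ici.2 (abs_nonneg _))
  rw [real_inner_smul_left, abs_mul, abs_of_nonneg ht.1]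
  exact mul_le_of_le_one_left (abs_nonneg _) ht.2

lemma subthm {Φ Ψ : ℝ → ℝ} {p q a : ℝ} (h : PF Φ p q) (hΨ : PS Ψ p q a) (K : ℝ) (hK0 : 0 < K)
    (hK : ∀ t s, 0 < t → 0 < s → Φ (t * s) ≤ K * (Φ t * Ψ s)) :
    ∃ C5 : ℝ, 0 < C5 ∧ ∀ (N : ℕ), 1 ≤ N → ∀ (ι : Type) [Fintype ι] (X : Submodule ℝ (ι → ℝ)) (μ : ι → ℝ),
      (∀ i, 0 < μ i) → ∑ i, μ i = 1 → (fun _ => (1:ℝ)) ∈ X → Module.finrank ℝ X ≤ N →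
      ∀ L : ℝ, ell N ≤ L → (∀ N', 1 ≤ N' → N' ≤ N → ∀ e : ι → EE N', (∀ i, ‖e i‖ ≤ 1) → SB e L) →
      ∃ (m : ℕ) (s : Fin m → ι) (lam : Fin m → ℝ), 1 ≤ m ∧
        (m : ℝ) ≤ C5 * Ψ ((N:ℝ) ^ (1 / min p 2)) * ell N * L ∧ (∀ j, 0 < lam j) ∧ ∑ j, lam j = 1 ∧
        ∀ f ∈ X, 1 ≤ ∑ i, μ i * Φ |f i| →
          (2 ^ q)⁻¹ * (2 ^ q)⁻¹ / 48 ≤ ∑ j, lam j * Φ |f (s j)| := by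
  obtain ⟨C5, hC5, hfin⟩ := finthm h hΨ K hK0 hK
  refine ⟨C5, hC5, ?_⟩
  intro N hN ι _ X μ hμ hμ1 h1X hfr L hL hSB
  have hne : Nonempty ι := by
    by_contra hc
    rw [not_nonempty_iff] at hc
    simp at hμ1
  set N' := Module.finrank ℝ X with hN'
  have hN1 : 1 ≤ N' := by
    rw [hN', Nat.one_le_iff_ne_zero]
    intro h0
    rw [Submodule.finrank_eq_zero] at h0
    rw [h0, Submodule.mem_bot] at h1X
    exact one_ne_zero (congrFun h1X (Classical.arbitrary ι))
  let u : Module.Basis (Fin N') ℝ X := Module.finBasis ℝ X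
  let G : EE N' → X := fun z => ∑ k, z k • u k
  let a : ι → EE N' := fun i => WithLp.toLp 2 fun k => (u k : ι → ℝ) i
  have hG : ∀ z i, inner ℝ z (a i) = (G z : ι → ℝ) i := by
    intro z i
    simp [G, a, PiLp.inner_apply, mul_comm]
  have hGs : ∀ f ∈ X, ∃ z, (G z : ι → ℝ) = f := by
    intro f hf
    refine ⟨WithLp.toLp 2 (u.repr ⟨f, hf⟩), ?_⟩
    have := u.sum_repr ⟨f, hf⟩
    exact congrArg Subtype.val this
  have hspan : ∀ z : EE N', (∀ i, inner ℝ z (a i) = 0) → z = 0 := by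
    intro z hz
    have h0 : G z = 0 := Subtype.ext (funext fun i => by rw [← hG, hz]; rfl)
    have := Fintype.linearIndependent_iff.1 u.linearIndependent _ h0
    ext k; simpa using this k
  have ha : ∀ i, a i ≠ 0 := by
    intro i hi
    obtain ⟨z, hz⟩ := hGs _ h1X
    have := hG z i
    rw [hi, hz, inner_zero_right] at this
    norm_num at this
  have hNN : (N':ℝ) ≤ N := by exact_mod_cast hfr
  have hN1' : (1:ℝ) ≤ N' := by exact_mod_cast hN1
  have hell : ell N' ≤ ell N := by
    unfold ell
    exact Real.logb_le_logb_of_le (by norm_num) (by linarith) (by linarith)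
  obtain ⟨m, s, lam, hm1, hm, hlam, hlam1, hmain⟩ := hfin N' hN1 ι a μ hμ hμ1 hspan ha L (hell.trans hL)
    (hSB N' hN1 hfr)
  have hr : 0 < min p 2 := lt_min (by linarith [h.hp]) (by norm_num)
  refine ⟨m, s, lam, hm1, hm.trans ?_, hlam, hlam1, ?_⟩
  · have hl := ell_ge hN1
    have h2 : (N':ℝ) ^ (1 / min p 2) ≤ (N:ℝ) ^ (1 / min p 2) := Real.rpow_le_rpow (by linarith) hNN (by positivity)
    have h3 := hΨ.mono (show (0:ℝ) ≤ (N':ℝ) ^ (1 / min p 2) by positivity) (show (0:ℝ) ≤ (N:ℝ) ^ (1 / min p 2) by positivity) h2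
    have h4 := hΨ.pos ((N':ℝ) ^ (1 / min p 2)) (by positivity)
    have h5 := h4.trans_le h3
    gcongr
    linarith
  · intro f hf h1
    obtain ⟨z, rfl⟩ := hGs f hf
    have := hmain z
    simp only [hG] at this
    exact this h1

end S13
end


noncomputable section
namespace S13

lemma boost {Φ : ℝ → ℝ} {p q : ℝ} (h : PF Φ p q) {ι : Type} [Fintype ι] (w : ι → ℝ) (hw : ∀ i, 0 ≤ w i)
    (f : ι → ℝ) (c : ℝ) (hc0 : 0 < c) (hc1 : c ≤ 1) (hf : c ≤ ∑ i, w i * Φ |f i|) :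
    1 ≤ ∑ i, w i * Φ |c⁻¹ * f i| := by
  have h1 : ∀ i, c⁻¹ * (w i * Φ |f i|) ≤ w i * Φ |c⁻¹ * f i| := fun i => by
    have := h.inc1 c⁻¹ |f i| ((one_le_inv₀ hc0).2 hc1) (abs_nonneg _)
    rw [abs_mul, abs_of_pos (inv_pos.2 hc0)]
    nlinarith [mul_le_mul_of_nonneg_left this (hw i)]
  refine le_trans ?_ (Finset.sum_le_sum fun i _ => h1 i)
  rw [← Finset.mul_sum, inv_mul_eq_div, one_le_div hc0]
  exact hf

lemma deboost {Φ : ℝ → ℝ} {p q : ℝ} (h : PF Φ p q) {ι : Type} [Fintype ι] (w : ι → ℝ) (hw : ∀ i, 0 ≤ w i)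
    (f : ι → ℝ) (c c' : ℝ) (hc0 : 0 < c) (hc1 : c ≤ 1) (hf : c' ≤ ∑ i, w i * Φ |c⁻¹ * f i|) :
    c' * c ^ q ≤ ∑ i, w i * Φ |f i| := by
  have hcq : 0 < c ^ q := by positivity
  have h1 : ∀ i, w i * Φ |c⁻¹ * f i| ≤ (w i * Φ |f i|) / c ^ q := fun i => by
    have := h.dec c⁻¹ |f i| ((one_le_inv₀ hc0).2 hc1) (abs_nonneg _)
    rw [abs_mul, abs_of_pos (inv_pos.2 hc0)]
    rw [Real.inv_rpow hc0.le] at this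
    rw [mul_div_assoc, div_eq_inv_mul]
    exact mul_le_mul_of_nonneg_left this (hw i)
  have h2 := hf.trans (Finset.sum_le_sum fun i _ => h1 i)
  rw [← Finset.sum_div, le_div_iff₀ hcq] at h2
  exact h2

lemma twostage {Φ Ψ : ℝ → ℝ} {p q a : ℝ} (h : PF Φ p q) (hΨ : PS Ψ p q a) (K : ℝ) (hK0 : 0 < K)
    (hK : ∀ t s, 0 < t → 0 < s → Φ (t * s) ≤ K * (Φ t * Ψ s)) :
    ∃ C6 c1 : ℝ, 0 < C6 ∧ 0 < c1 ∧ ∀ (N : ℕ), 1 ≤ N → ∀ (ι : Type) [Fintype ι] (X : Submodule ℝ (ι → ℝ)) (μ : ι → ℝ),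
      (∀ i, 0 < μ i) → ∑ i, μ i = 1 → (fun _ => (1:ℝ)) ∈ X → Module.finrank ℝ X ≤ N →
      ∃ (m : ℕ) (s : Fin m → ι) (lam : Fin m → ℝ), 
        (m : ℝ) ≤ C6 * Ψ ((N:ℝ) ^ (1 / min p 2)) * ell N ^ 2 ∧ (∀ j, 0 < lam j) ∧ ∑ j, lam j = 1 ∧
        ∀ f ∈ X, 1 ≤ ∑ i, μ i * Φ |f i| → c1 ≤ ∑ j, lam j * Φ |f (s j)| := by
  obtain ⟨C5, hC5, hsub⟩ := subthm h hΨ K hK0 hK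
  set c0 : ℝ := (2 ^ q)⁻¹ * (2 ^ q)⁻¹ / 48 with hc0
  have hq0 : (0:ℝ) ≤ q := by linarith [h.hq]
  have hc00 : 0 < c0 := by positivity
  have hc01 : c0 ≤ 1 := by
    have h1 : ((2:ℝ) ^ q)⁻¹ ≤ 1 := inv_le_one_of_one_le₀ (Real.one_le_rpow (by norm_num) hq0)
    have h2 : 0 < ((2:ℝ) ^ q)⁻¹ := by positivity
    rw [hc0]; nlinarith
  have hΨ1 := hΨ.pos 1 one_pos
  set C' := 16 * C5 * Ψ 1 with hC'
  have hC'0 : 0 < C' := by positivity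
  set C2 := 1 + 2 * |Real.log (4 * C')| + 2 * (q + 3) with hC2
  have hC20 : 0 < C2 := by positivity
  refine ⟨C5 * C2, c0 * c0 ^ q, by positivity, by positivity, ?_⟩
  intro N hN ι _ X μ hμ hμ1 h1X hfr
  have hl := ell_ge hN
  have hN1 : (1:ℝ) ≤ N := by exact_mod_cast hN
  have hN0 : (0:ℝ) < N := by linarith
  set T := (N:ℝ) ^ (1 / min p 2) with hT
  have hr1 : 1 ≤ min p 2 := le_min h.hp.le (by norm_num)
  have hT1 : 1 ≤ T := Real.one_le_rpow hN1 (by positivity)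
  have hTN : T ≤ N := by
    have := Real.rpow_le_rpow_of_exponent_le hN1 (show 1 / min p 2 ≤ 1 by rw [div_le_one (by linarith)]; exact hr1)
    rwa [Real.rpow_one] at this
  have hΨT : Ψ T ≤ (N:ℝ) ^ q * Ψ 1 := by
    have := hΨ.dec T 1 hT1 one_pos
    rw [mul_one] at this
    exact this.trans (by gcongr)
  have hΨT0 : 0 < Ψ T := hΨ.pos _ (by linarith)
  have hlN : ell N ≤ 2 * N := by
    unfold ell
    rw [Real.logb_le_iff_le_rpow (by norm_num) (by positivity)]
    have := one_add_mul_self_le_rpow_one_add (s := (1:ℝ)) (by norm_num) (p := 2 * N) (by linarith)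
    norm_num at this
    linarith
  have hlogN : Real.log N ≤ ell N := by
    rw [ell_eq hN, Real.logb, ]
    have h1 : 0 ≤ Real.log N := Real.log_nonneg hN1
    have h2 : Real.log N ≤ Real.log N / Real.log 2 := by
      rw [le_div_iff₀ (Real.log_pos (by norm_num))]
      have := Real.log_two_lt_d9
      nlinarith
    linarith
  -- stage one
  have hL1 : max (ell N) (N * (2 * Real.log (4 * N))) ≤ 8 * (N:ℝ)^2 := by
    refine max_le (by nlinarith) ?_
    have := Real.log_le_self (show (0:ℝ) ≤ 4 * N by positivity)
    nlinarith
  obtain ⟨m0, s, lam, hm01, hm0, hlam, hlam1, hst1⟩ := hsub N hN ι X μ hμ hμ1 h1X hfr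
    (max (ell N) (N * (2 * Real.log (4 * N)))) (le_max_left _ _) (by
      intro N' h1 h2 e he
      have h2' : (N':ℝ) ≤ N := by exact_mod_cast h2
      have h1' : (1:ℝ) ≤ N' := by exact_mod_cast h1
      have := Real.log_nonneg (show (1:ℝ) ≤ 4 * N' by linarith)
      refine SB_dim h1 e he (le_trans ?_ (le_max_right _ _))
      gcongr)
  have hm0' : (1:ℝ) ≤ m0 := by exact_mod_cast hm01
  have hm0C : (m0:ℝ) ≤ C' * (N:ℝ) ^ (q + 3) := by
    refine hm0.trans ?_
    calc C5 * Ψ T * ell N * max (ell N) (N * (2 * Real.log (4 * N)))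
        ≤ C5 * ((N:ℝ) ^ q * Ψ 1) * (2 * N) * (8 * (N:ℝ)^2) := by gcongr
      _ = C' * (N:ℝ) ^ (q + 3) := by
        rw [Real.rpow_add hN0, hC']
        have : (N:ℝ) ^ (3:ℝ) = N ^ 3 := by norm_cast
        rw [this]; ring
  have hL2 : max (ell N) (2 * Real.log (4 * m0)) ≤ C2 * ell N := by
    have hab := abs_nonneg (Real.log (4 * C'))
    refine max_le ?_ ?_
    · nlinarith
    · have h1 : Real.log (4 * m0) ≤ Real.log (4 * C' * (N:ℝ) ^ (q + 3)) := by
        apply Real.log_le_log (by positivity)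
        linarith
      rw [Real.log_mul (x := 4 * C') (by positivity) (by positivity), Real.log_rpow hN0] at h1
      have h2 := le_abs_self (Real.log (4 * C'))
      have h3 : (q + 3) * Real.log N ≤ (q + 3) * ell N := by gcongr
      rw [hC2]
      nlinarith
  have hne : Nonempty (Fin m0) := ⟨⟨0, hm01⟩⟩
  obtain ⟨m, s2, lam2, hm1, hm, hlam2, hlam21, hst2⟩ := hsub N hN (Fin m0) (X.map (LinearMap.funLeft ℝ ℝ s)) lam hlam hlam1
    ⟨_, h1X, rfl⟩ ((Submodule.finrank_map_le _ _).trans hfr) (max (ell N) (2 * Real.log (4 * m0))) (le_max_left _ _) (by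
      intro N' h1 h2 e he
      refine SB_finite e he (le_trans ?_ (le_max_right _ _))
      simp)
  refine ⟨m, fun j => s (s2 j), lam2, hm.trans ?_, hlam2, hlam21, ?_⟩
  · calc C5 * Ψ T * ell N * max (ell N) (2 * Real.log (4 * m0)) ≤ C5 * Ψ T * ell N * (C2 * ell N) := by gcongr
      _ = _ := by ring
  · intro f hf h1
    have h2 := hst1 f hf h1
    have h3 := boost h lam (fun j => (hlam j).le) (fun j => f (s j)) c0 hc00 hc01 h2
    have h4 := hst2 (fun j => c0⁻¹ * f (s j)) ⟨c0⁻¹ • f, X.smul_mem _ hf, rfl⟩ h3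
    exact deboost h lam2 (fun j => (hlam2 j).le) (fun j => f (s (s2 j))) c0 c0 hc00 hc01 h4

end S13
end


noncomputable section
namespace S13


set_option maxHeartbeats 2000000 in
lemma stage0 {Φ : ℝ → ℝ} {p q : ℝ} (h : PF Φ p q) (Ω : Type) [MetricSpace Ω] [CompactSpace Ω]
    [MeasurableSpace Ω] [BorelSpace Ω] (μ : Measure Ω) [IsProbabilityMeasure μ]
    (X : Submodule ℝ (Ω → ℝ)) (hX : ∀ f ∈ X, Continuous f) [FiniteDimensional ℝ X] :
    ∃ (ι : Type) (_ : Fintype ι) (x : ι → Ω) (w : ι → ℝ), (∀ i, 0 < w i) ∧ ∑ i, w i = 1 ∧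
      ∀ f ∈ X, 1 ≤ ∫ y, Φ |f y| ∂μ → 1 / 4 ≤ ∑ i, w i * Φ |f (x i)| := by
  classical
  have hΩ : Nonempty Ω := nonempty_of_isProbabilityMeasure μ
  set N := Module.finrank ℝ X with hN
  let u : Module.Basis (Fin N) ℝ X := Module.finBasis ℝ X
  let G : (Fin N → ℝ) → Ω → ℝ := fun c y => ∑ k, c k * (u k : Ω → ℝ) y
  have hGs : ∀ f ∈ X, ∃ c, G c = f := by
    intro f hf
    refine ⟨u.repr ⟨f, hf⟩, ?_⟩
    funext y
    have h2 : ((∑ k, u.repr ⟨f, hf⟩ k • u k : X) : Ω → ℝ) y = f y := by rw [u.sum_repr ⟨f, hf⟩]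
    rw [← h2, Submodule.coe_sum, Finset.sum_apply]
    rfl
  have hG0 : ∀ c, (∀ y, G c y = 0) → c = 0 := by
    intro c hc
    have h0 : ∑ k, c k • u k = 0 := by
      apply Subtype.ext
      funext y
      simpa [G] using hc y
    funext k
    exact Fintype.linearIndependent_iff.1 u.linearIndependent _ h0 k
  have hGc : Continuous fun z : (Fin N → ℝ) × Ω => G z.1 z.2 := by
    refine continuous_finsetSum _ fun k _ => ?_
    have := hX _ (u k).2
    fun_prop
  have hGsm : ∀ (t : ℝ) c y, G (t • c) y = t * G c y := by
    intro t c y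
    simp [G, Finset.mul_sum, mul_assoc]
  -- a norming finite set
  have hY : ∃ Y : Finset Ω, ∀ c ∈ Metric.sphere (0 : Fin N → ℝ) 1, ∃ y ∈ Y, G c y ≠ 0 := by
    obtain ⟨Y, hY⟩ := (isCompact_sphere (0 : Fin N → ℝ) 1).elim_finite_subcover (fun y : Ω => {c | G c y ≠ 0})
      (fun y => isOpen_ne_fun (hGc.comp (by fun_prop : Continuous fun c : Fin N → ℝ => (c, y))) continuous_const) (by
        intro c hc
        by_contra hcc
        have : c = 0 := hG0 c fun y => by
          by_contra hy
          exact hcc (Set.mem_iUnion.2 ⟨y, hy⟩)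
        rw [this] at hc
        simp at hc)
    refine ⟨Y, fun c hc => ?_⟩
    obtain ⟨y, hy1, hy2⟩ := Set.mem_iUnion₂.1 (hY hc)
    exact ⟨y, hy1, hy2⟩
  obtain ⟨Y0, hY0⟩ := hY
  set Y : Finset Ω := insert (Classical.arbitrary Ω) Y0 with hYdef
  have hYc : 0 < Y.card := Finset.card_pos.2 ⟨_, Finset.mem_insert_self _ _⟩
  have hYc' : (0:ℝ) < Y.card := by exact_mod_cast hYc
  let A : (Fin N → ℝ) →ₗ[ℝ] (Y → ℝ) :=
    { toFun := fun c y => G c y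
      map_add' := fun c d => by funext y; simp [G, add_mul, Finset.sum_add_distrib]
      map_smul' := fun t c => by funext y; simp [hGsm] }
  have hker : LinearMap.ker A = ⊥ := by
    rw [LinearMap.ker_eq_bot']
    intro c hc
    by_contra hne
    have hn : 0 < ‖c‖ := norm_pos_iff.2 hne
    obtain ⟨y, hy, hy0⟩ := hY0 (‖c‖⁻¹ • c) (by simp [norm_smul, hn.ne'])
    apply hy0
    have : G c y = 0 := congrFun hc ⟨y, Finset.mem_insert_of_mem hy⟩
    rw [hGsm, this, mul_zero]
  obtain ⟨Kc, hKc, hanti⟩ := A.exists_antilipschitzWith hker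
  have hbound : ∀ c, ‖c‖ ≤ Kc * ‖A c‖ := fun c => ZeroHomClass.bound_of_antilipschitz A hanti c
  have hΦ1 := h.pos 1 one_pos
  set R : ℝ := max 1 (2 * Y.card / Φ 1) with hR
  have hR1 : 1 ≤ R := le_max_left _ _
  have hΦR : 2 * Y.card ≤ Φ R := by
    have h1 := h.inc1 R 1 hR1 zero_le_one
    rw [mul_one] at h1
    refine le_trans ?_ h1
    rw [← div_le_iff₀ hΦ1]; exact le_max_right _ _
  set ρ : ℝ := Kc * R with hρ
  have hbig : ∀ c, ρ < ‖c‖ → ∃ y ∈ Y, R < |G c y| := by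
    intro c hc
    by_contra hcc
    push Not at hcc
    have h1 : ‖A c‖ ≤ R := by
      rw [pi_norm_le_iff_of_nonneg (by linarith)]
      intro y
      exact hcc y.1 y.2
    have := (hbound c).trans (mul_le_mul_of_nonneg_left h1 Kc.2)
    exact absurd hc (not_lt.2 this)
  -- uniform continuity
  have hFc : Continuous fun z : Metric.closedBall (0 : Fin N → ℝ) ρ × Ω => Φ |G z.1 z.2| :=
    h.contAbs.comp (hGc.comp ((continuous_subtype_val.comp continuous_fst).prodMk continuous_snd))
  have hcs : CompactSpace (Metric.closedBall (0 : Fin N → ℝ) ρ) := isCompact_iff_compactSpace.1 (isCompact_closedBall _ _)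
  obtain ⟨δ, hδ, hunif⟩ := Metric.uniformContinuous_iff.1 (CompactSpace.uniformContinuous_of_continuous hFc) (1/2) (by norm_num)
  let e : ℕ → Ω := TopologicalSpace.denseSeq Ω
  have hdense : ∃ n : ℕ, ∀ y : Ω, ∃ k ≤ n, dist (e k) y < δ := by
    obtain ⟨t, ht⟩ := isCompact_univ.elim_finite_subcover (fun k : ℕ => Metric.ball (e k) δ) (fun _ => Metric.isOpen_ball) (by
      intro y _
      obtain ⟨k, hk⟩ := (TopologicalSpace.denseRange_denseSeq Ω).exists_dist_lt y hδ
      exact Set.mem_iUnion.2 ⟨k, hk⟩)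
    refine ⟨t.sup id, fun y => ?_⟩
    obtain ⟨k, hk1, hk2⟩ := Set.mem_iUnion₂.1 (ht (Set.mem_univ y))
    exact ⟨k, Finset.le_sup (f := id) hk1, by rw [dist_comm]; exact hk2⟩
  obtain ⟨n, hn⟩ := hdense
  let π : Ω → Fin (n+1) := fun y => ⟨SimpleFunc.nearestPtInd e n y, Nat.lt_succ_of_le (SimpleFunc.nearestPtInd_le e n y)⟩
  have hπm : Measurable π := by
    have h1 : Measurable fun y => SimpleFunc.nearestPtInd e n y := (SimpleFunc.nearestPtInd e n).measurable
    refine measurable_to_countable' fun i => ?_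
    have : π ⁻¹' {i} = (fun y => SimpleFunc.nearestPtInd e n y) ⁻¹' {(i : ℕ)} := by
      ext y; simp [π, Fin.ext_iff]
    rw [this]
    exact h1 (measurableSet_singleton _)
  have hπd : ∀ y, dist (e (π y)) y < δ := by
    intro y
    obtain ⟨k, hk, hd⟩ := hn y
    have h1 := SimpleFunc.edist_nearestPt_le e y hk
    have h2 : dist (SimpleFunc.nearestPt e n y) y ≤ dist (e k) y := by
      rw [edist_dist, edist_dist] at h1
      exact (ENNReal.ofReal_le_ofReal_iff dist_nonneg).1 h1
    exact h2.trans_lt hd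
  set ν : Fin (n+1) → ℝ := fun i => (μ.map π).real {i} with hν
  have hpm : IsProbabilityMeasure (μ.map π) := Measure.isProbabilityMeasure_map hπm.aemeasurable
  have hIntg : ∀ g : Fin (n+1) → ℝ, ∫ y, g (π y) ∂μ = ∑ i, ν i * g i := by
    intro g
    rw [← integral_map hπm.aemeasurable (Measurable.of_discrete).aestronglyMeasurable, integral_fintype (Integrable.of_finite)]
    rfl
  have hν1 : ∑ i, ν i = 1 := by
    have := hIntg (fun _ => 1)
    simpa using this.symm
  -- the finite space
  let I := Fin (n+1) ⊕ Y
  let x : I → Ω := Sum.elim (fun i => e i) (fun y => y)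
  let w : I → ℝ := Sum.elim (fun i => ν i / 2) (fun _ => 1 / (2 * Y.card))
  have hw0 : ∀ i, 0 ≤ w i := by
    rintro (i | y)
    · exact div_nonneg measureReal_nonneg (by norm_num)
    · exact (div_pos one_pos (mul_pos two_pos hYc')).le
  have hw1 : ∑ i, w i = 1 := by
    rw [Fintype.sum_sum_type]
    show ∑ i, ν i / 2 + ∑ y : Y, 1 / (2 * (Y.card:ℝ)) = 1
    rw [← Finset.sum_div, hν1, Finset.sum_const, Finset.card_univ, Fintype.card_coe, nsmul_eq_mul]
    have : ∀ z : ℝ, 0 < z → 1 / 2 + z * (1 / (2 * z)) = 1 := fun z hz => by field_simp; norm_num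
    exact this _ hYc'
  have hsub : ∀ g : I → ℝ, ∑ i : {i : I // 0 < w i}, w i * g i = ∑ i, w i * g i := by
    intro g
    rw [← Finset.sum_subtype (Finset.univ.filter fun i => 0 < w i) (by simp) (fun i => w i * g i)]
    refine Finset.sum_filter_of_ne fun i _ hi => ?_
    refine lt_of_le_of_ne (hw0 i) fun h0 => hi ?_
    rw [← h0, zero_mul]
  refine ⟨{i : I // 0 < w i}, inferInstance, fun i => x i, fun i => w i, fun i => i.2, ?_, ?_⟩
  · have := hsub (fun _ => 1)
    simp only [mul_one] at this
    rw [this, hw1]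
  · intro f hf hint1
    obtain ⟨c, rfl⟩ := hGs f hf
    rw [hsub (fun i => Φ |G c (x i)|)]
    have hΦ0 : ∀ y, 0 ≤ Φ |G c y| := fun y => h.nonneg _ (abs_nonneg _)
    rw [Fintype.sum_sum_type]
    have hA0 : 0 ≤ ∑ i, w (Sum.inl i) * Φ |G c (x (Sum.inl i))| := Finset.sum_nonneg fun i _ => mul_nonneg (hw0 _) (hΦ0 _)
    have hB0 : 0 ≤ ∑ i, w (Sum.inr i) * Φ |G c (x (Sum.inr i))| := Finset.sum_nonneg fun i _ => mul_nonneg (hw0 _) (hΦ0 _)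
    by_cases hc : ‖c‖ ≤ ρ
    · have h1 : ∀ y, Φ |G c y| ≤ Φ |G c (e (π y))| + 1/2 := by
        intro y
        have := hunif (a := (⟨c, by simpa using hc⟩, e (π y))) (b := (⟨c, by simpa using hc⟩, y)) (by
          rw [Prod.dist_eq, dist_self]; exact max_lt hδ (hπd y))
        rw [Real.dist_eq, abs_lt] at this
        have := this.1
        simp only at this
        linarith
      have hi1 : Integrable (fun y => Φ |G c y|) μ := by
        have : Continuous fun y => Φ |G c y| := h.contAbs.comp (hX _ hf)
        exact this.integrable_of_hasCompactSupport (HasCompactSupport.of_compactSpace _)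
      have hi2 : Integrable (fun y => Φ |G c (e (π y))|) μ :=
        (Integrable.of_finite (μ := μ.map π) (f := fun i : Fin (n+1) => Φ |G c (e i)|)).comp_measurable hπm
      have h2 := integral_mono hi1 (hi2.add (integrable_const (1/2))) h1
      have h3 : ∫ y, (Φ |G c (e (π y))| + 1/2) ∂μ = ∑ i, ν i * Φ |G c (e i)| + 1/2 := by
        rw [integral_add hi2 (integrable_const _), hIntg (fun i => Φ |G c (e i)|)]
        simp
      have h4 : (1:ℝ) ≤ ∑ i, ν i * Φ |G c (e i)| + 1/2 := by
        rw [← h3]; exact hint1.trans h2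
      have h5 : ∑ i, w (Sum.inl i) * Φ |G c (x (Sum.inl i))| = (∑ i, ν i * Φ |G c (e i)|) / 2 := by
        rw [Finset.sum_div]
        refine Finset.sum_congr rfl fun i _ => ?_
        show ν i / 2 * Φ |G c (e i)| = _
        ring
      linarith
    · push Not at hc
      obtain ⟨y, hy, hyR⟩ := hbig c hc
      have h1 := Finset.single_le_sum (f := fun i : Y => w (Sum.inr i) * Φ |G c (x (Sum.inr i))|)
        (fun i _ => mul_nonneg (hw0 _) (hΦ0 _)) (Finset.mem_univ ⟨y, hy⟩)
      have h2 : Φ R ≤ Φ |G c y| := h.mono (Set.mem_Ici.2 (by linarith)) (Set.mem_Ici.2 (abs_nonneg _)) hyR.le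
      have h3 : 1 ≤ 1 / (2 * (Y.card:ℝ)) * Φ |G c y| := by
        rw [div_mul_eq_mul_div, one_mul, one_le_div (mul_pos two_pos hYc')]
        linarith
      have h4 : 1 / (2 * (Y.card:ℝ)) * Φ |G c y| ≤ ∑ i, w (Sum.inr i) * Φ |G c (x (Sum.inr i))| := h1
      linarith

end S13
end


noncomputable section
namespace S13

lemma dec_of {Φ : ℝ → ℝ} (hpre : IsPhiPrefun Φ) {q0 q : ℝ} (hd : DecQ Φ q0) (hq : q0 ≤ q) (s t : ℝ)
    (hs : 1 ≤ s) (ht : 0 < t) : Φ (s * t) ≤ s ^ q * Φ t := by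
  have h0 := hpre.nonneg t ht.le
  have hsq : s ^ q0 ≤ s ^ q := Real.rpow_le_rpow_of_exponent_le hs hq
  rcases hs.eq_or_lt with rfl | hs1
  · simp
  · have h1 := hd t (s * t) ht (by nlinarith)
    have hs0 : 0 < s := by linarith
    have htq : 0 < t ^ q0 := Real.rpow_pos_of_pos ht _
    have hsq0 : 0 < s ^ q0 := Real.rpow_pos_of_pos hs0 _
    rw [Real.mul_rpow hs0.le ht.le, div_le_div_iff₀ (by positivity) htq] at h1
    have h2 : Φ (s * t) ≤ s ^ q0 * Φ t := by
      refine le_of_mul_le_mul_right (a := t ^ q0) ?_ htq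
      linarith
    exact h2.trans (mul_le_mul_of_nonneg_right hsq h0)

lemma pos_of {Φ : ℝ → ℝ} (hpre : IsPhiPrefun Φ) {q0 : ℝ} (hd : DecQ Φ q0) (t : ℝ) (ht : 0 < t) : 0 < Φ t := by
  rcases (hpre.nonneg t ht.le).eq_or_lt with h0 | h0
  · exfalso
    obtain ⟨u, hu1, hu2⟩ := ((hpre.tendsto_atTop.eventually_ge_atTop 1).and (Filter.eventually_ge_atTop t)).exists
    have h1 := dec_of hpre hd le_rfl (u / t) t ((one_le_div ht).2 hu2) ht
    rw [div_mul_cancel₀ _ ht.ne', ← h0, mul_zero] at h1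
    linarith
  · exact h0

lemma pf_of {Φ φ : ℝ → ℝ} (hpre : IsPhiPrefun Φ) {p q0 q : ℝ} (hp : 1 < p) (hinc : IncP Φ p) (hd : DecQ Φ q0)
    (hq : q0 ≤ q) (hq2 : 2 ≤ q) (hderiv : ∀ t : ℝ, 0 < t → HasDerivAt Φ (φ t) t) : PF Φ p q where
  hp := hp
  hq := hq2
  mono := hpre.mono
  map_zero := hpre.map_zero
  pos := pos_of hpre hd
  cont := by
    intro x hx
    rcases (Set.mem_Ici.1 hx).eq_or_lt with rfl | h0
    · rw [← continuousWithinAt_Ioi_iff_Ici]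
      have := hpre.tendsto_zero
      rw [ContinuousWithinAt, hpre.map_zero]
      exact this
    · exact (hderiv x h0).continuousAt.continuousWithinAt
  inc := by
    intro s t hs ht
    rcases ht.eq_or_lt with rfl | ht
    · simp [hpre.map_zero]
    rcases hs.eq_or_lt with rfl | hs1
    · simp
    · have h1 := hinc t (s * t) ht (by nlinarith)
      have hs0 : 0 < s := by linarith
      have htq : 0 < t ^ p := Real.rpow_pos_of_pos ht _
      have hsq0 : 0 < s ^ p := Real.rpow_pos_of_pos hs0 _
      rw [Real.mul_rpow hs0.le ht.le, div_le_div_iff₀ htq (by positivity)] at h1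
      refine le_of_mul_le_mul_right (a := t ^ p) ?_ htq
      linarith
  dec := by
    intro s t hs ht
    rcases ht.eq_or_lt with rfl | ht
    · simp [hpre.map_zero]
    · exact dec_of hpre hd hq s t hs ht

lemma ps_of {Ψ : ℝ → ℝ} (hpre : IsPhiPrefun Ψ) {p q0 q a : ℝ} (ha : 1 ≤ a) (hinc : AIncP Ψ p a) (hd : DecQ Ψ q0)
    (hq : q0 ≤ q) : PS Ψ p q a where
  ha := ha
  mono := hpre.mono
  pos := pos_of hpre hd
  ainc := by
    intro s t hs hst
    have hΨ := pos_of hpre hd s hs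
    rcases hst.eq_or_lt with rfl | hlt
    · rw [div_self hs.ne', Real.one_rpow]; nlinarith
    · have h1 := hinc s t hs hlt
      have ht : 0 < t := by linarith
      have hsp : 0 < s ^ p := Real.rpow_pos_of_pos hs _
      rw [div_le_iff₀ hsp] at h1
      rw [Real.div_rpow hs.le ht.le]
      refine h1.trans (le_of_eq ?_)
      ring
  dec := fun s t hs ht => dec_of hpre hd hq s t hs ht

end S13
end

open S13 in
theorem statement13 (p : ℝ) (hp : 1 < p)
    (Φ φ : ℝ → ℝ) (hpre : IsPhiPrefun Φ) (hphiw : ∃ a : ℝ, 1 ≤ a ∧ AIncP Φ 1 a)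
    (hinc : IncP Φ p) (hdecΦ : ∃ q : ℝ, 1 ≤ q ∧ DecQ Φ q)
    (hsupfin : ∃ M : ℝ, ∀ t : ℝ, 0 < t → Φ t * Φ t⁻¹ ≤ M)
    (hderiv : ∀ t : ℝ, 0 < t → HasDerivAt Φ (φ t) t)
    (hφcont : ContinuousOn φ (Set.Ioi 0))
    (Ψ : ℝ → ℝ) (hpreΨ : IsPhiPrefun Ψ) (hpsiw : ∃ a : ℝ, 1 ≤ a ∧ AIncP Ψ 1 a)
    (aΨ : ℝ) (haΨ : 1 ≤ aΨ) (hAΨ : AIncP Ψ p aΨ)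
    (hdecΨ : ∃ q : ℝ, 1 ≤ q ∧ DecQ Ψ q)
    (K : ℝ) (hK1 : 1 ≤ K)
    (hK : ∀ t s : ℝ, 0 < t → 0 < s → Φ (t * s) / Φ t ≤ K * Ψ s) :
    ∃ C c : ℝ, 0 < C ∧ 0 < c ∧
      ∀ (Ω : Type) [MetricSpace Ω] [CompactSpace Ω] [MeasurableSpace Ω] [BorelSpace Ω],
      ∀ (μ : Measure Ω), IsProbabilityMeasure μ →
      ∀ N : ℕ, 1 ≤ N →
      ∀ X : Submodule ℝ (Ω → ℝ),
        (∀ f ∈ X, Continuous f) →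
        Module.finrank ℝ X = N →
        (fun _ : Ω => (1 : ℝ)) ∈ X →
        ∃ (m : ℕ) (x : Fin m → Ω) (lam : Fin m → ℝ),
          (m : ℝ) ≤ c * Ψ ((N : ℝ) ^ (1 / min p 2)) * (Real.logb 2 (2 * N)) ^ 3 ∧
          (∀ j, 0 < lam j) ∧ (∑ j, lam j) = 1 ∧
          ∀ f ∈ X, luxNorm μ Φ f ≤ C * (MOf Φ Ψ m) ^ (1 / p) * wDiscLuxNorm Ψ x lam f := by
  obtain ⟨q1, _, hd1⟩ := hdecΦ
  obtain ⟨q2, _, hd2⟩ := hdecΨ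
  set q := max (max q1 q2) 2 with hq
  have h : PF Φ p q := pf_of hpre hp hinc hd1 ((le_max_left _ _).trans (le_max_left _ _)) (le_max_right _ _) hderiv
  have hΨ : PS Ψ p q aΨ := ps_of hpreΨ haΨ hAΨ hd2 ((le_max_right _ _).trans (le_max_left _ _))
  have hK0 : 0 < K := by linarith
  have hK' : ∀ t s, 0 < t → 0 < s → Φ (t * s) ≤ K * (Φ t * Ψ s) := by
    intro t s ht hs
    have := hK t s ht hs
    rw [div_le_iff₀ (h.pos t ht)] at this
    linarith
  obtain ⟨C6, c1, hC6, hc1, htwo⟩ := twostage h hΨ K hK0 hK'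
  set c2 : ℝ := c1 * (1 / 4) ^ q with hc2
  have hc20 : 0 < c2 := by positivity
  have hΦ1 := h.pos 1 one_pos
  set C : ℝ := 2 * K * Φ 1 / c2 + 1 with hC
  have hC1 : 1 ≤ C := by
    have : 0 ≤ 2 * K * Φ 1 / c2 := by positivity
    linarith
  have hC0 : 0 < C := by linarith
  refine ⟨C, C6, hC0, hC6, ?_⟩
  intro Ω _ _ _ _ μ _ N hN X hX hfr h1X
  have hfd : FiniteDimensional ℝ X := Module.finite_of_finrank_pos (by omega)
  obtain ⟨ι, _, y, w, hw, hw1, hst0⟩ := stage0 h Ω μ X hX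
  obtain ⟨m, s, lam, hm, hlam, hlam1, hmain⟩ := htwo N hN ι (X.map (LinearMap.funLeft ℝ ℝ y)) w hw hw1
    ⟨_, h1X, rfl⟩ ((Submodule.finrank_map_le _ _).trans hfr.le)
  have hdom : ∀ f ∈ X, 1 ≤ ∫ z, Φ |f z| ∂μ → c2 ≤ ∑ j, lam j * Φ |f (y (s j))| := by
    intro f hf h1
    have h2 := boost h w (fun i => (hw i).le) (fun i => f (y i)) (1/4) (by norm_num) (by norm_num) (hst0 f hf h1)
    have h3 := hmain (fun i => (1/4 : ℝ)⁻¹ * f (y i)) ⟨(1/4 : ℝ)⁻¹ • f, X.smul_mem _ hf, rfl⟩ h2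
    exact deboost h lam (fun j => (hlam j).le) (fun j => f (y (s j))) (1/4) c1 (by norm_num) (by norm_num) h3
  have hl := ell_ge hN
  have hN1 : (1:ℝ) ≤ N := by exact_mod_cast hN
  refine ⟨m, fun j => y (s j), lam, ?_, hlam, hlam1, ?_⟩
  · refine hm.trans ?_
    have hT := hΨ.pos ((N:ℝ) ^ (1 / min p 2)) (by positivity)
    show _ ≤ C6 * Ψ ((N : ℝ) ^ (1 / min p 2)) * (ell N) ^ 3
    refine mul_le_mul_of_nonneg_left ?_ (by positivity)
    exact pow_le_pow_right₀ hl (by norm_num)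
  intro f hf
  have hΨ0 : ∀ t, 0 ≤ t → 0 ≤ Ψ t := hpreΨ.nonneg
  have hΦΨ : ∀ t, 0 ≤ t → Φ t ≤ K * Φ 1 * Ψ t := by
    intro t ht
    rcases ht.eq_or_lt with rfl | ht
    · rw [hpre.map_zero]
      exact mul_nonneg (by positivity) (hΨ0 0 le_rfl)
    · have := hK' 1 t one_pos ht
      rw [one_mul] at this
      linarith
  set S : Set ℝ := {l : ℝ | 0 < l ∧ (∑ j, lam j * Ψ (|f (y (s j))| / l)) ≤ 1} with hS
  have hwS : wDiscLuxNorm Ψ (fun j => y (s j)) lam f = sInf S := rfl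
  have hkey : ∀ l ∈ S, luxNorm μ Φ f ≤ C * l := by
    rintro l ⟨hl0, hl1⟩
    refine csInf_le ⟨0, fun z hz => hz.1.le⟩ ⟨by positivity, ?_⟩
    by_contra hc
    push Not at hc
    have e1 : ∀ z, |f z| / (C * l) = |((C * l)⁻¹ • f) z| := by
      intro z
      rw [Pi.smul_apply, smul_eq_mul, abs_mul, abs_of_pos (by positivity : 0 < (C * l)⁻¹), inv_mul_eq_div]
    simp only [e1] at hc
    have h1 := hdom ((C * l)⁻¹ • f) (X.smul_mem _ hf) hc.le
    have h2 : ∀ j, lam j * Φ |((C * l)⁻¹ • f) (y (s j))| ≤ C⁻¹ * (K * Φ 1) * (lam j * Ψ (|f (y (s j))| / l)) := by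
      intro j
      have hnn : 0 ≤ |f (y (s j))| / l := by positivity
      have e2 : |((C * l)⁻¹ • f) (y (s j))| = C⁻¹ * (|f (y (s j))| / l) := by
        rw [← e1]; field_simp
      rw [e2]
      have h3 := h.small C⁻¹ _ (inv_pos.2 hC0) (inv_le_one_of_one_le₀ hC1) hnn
      have h4 := mul_le_mul_of_nonneg_left (hΦΨ _ hnn) (inv_pos.2 hC0).le
      have h5 := mul_le_mul_of_nonneg_left (h3.trans h4) (hlam j).le
      linarith
    have h3 := h1.trans (Finset.sum_le_sum fun j _ => h2 j)
    rw [← Finset.mul_sum] at h3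
    have h4 : c2 ≤ C⁻¹ * (K * Φ 1) := by
      refine h3.trans (mul_le_of_le_one_right (by positivity) hl1)
    rw [inv_mul_eq_div, le_div_iff₀ hC0, hC] at h4
    have h5 : c2 * (2 * K * Φ 1 / c2 + 1) = 2 * K * Φ 1 + c2 := by field_simp
    rw [h5] at h4
    have : 0 < K * Φ 1 := by positivity
    linarith
  have hne : S.Nonempty := by
    have hev : ∀ᶠ t in nhdsWithin (0:ℝ) (Set.Ioi 0), Ψ t < 1 ∧ t ∈ Set.Ioi (0:ℝ) :=
      (hpreΨ.tendsto_zero.eventually_lt_const one_pos).and self_mem_nhdsWithin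
    obtain ⟨d, hd, hd0⟩ := hev.exists
    have hd0 : 0 < d := hd0
    set B : ℝ := ∑ j, |f (y (s j))| + 1 with hB
    have hB0 : 0 < B := by
      have : 0 ≤ ∑ j, |f (y (s j))| := Finset.sum_nonneg fun j _ => abs_nonneg _
      linarith
    refine ⟨B / d, by positivity, ?_⟩
    rw [← hlam1]
    refine Finset.sum_le_sum fun j _ => mul_le_of_le_one_right (hlam j).le ?_
    refine le_trans (hpreΨ.mono (Set.mem_Ici.2 (by positivity)) (Set.mem_Ici.2 hd0.le) ?_) hd.le
    have h1 : |f (y (s j))| ≤ B := by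
      have := Finset.single_le_sum (f := fun j => |f (y (s j))|) (fun j _ => abs_nonneg _) (Finset.mem_univ j)
      linarith
    rw [div_le_iff₀ (by positivity), mul_div_cancel₀ _ hd0.ne']
    exact h1
  rw [hwS]
  have h1 : luxNorm μ Φ f / C ≤ sInf S := le_csInf hne fun l hl => by
    rw [div_le_iff₀ hC0, mul_comm]; exact hkey l hl
  have h2 : 0 ≤ sInf S := Real.sInf_nonneg fun l hl => hl.1.le
  have h3 : 1 ≤ (MOf Φ Ψ m) ^ (1 / p) := Real.one_le_rpow (le_max_left _ _) (by positivity)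
  rw [div_le_iff₀ hC0] at h1
  calc luxNorm μ Φ f ≤ C * sInf S := by linarith
    _ ≤ C * (MOf Φ Ψ m) ^ (1 / p) * sInf S := by
      refine mul_le_mul_of_nonneg_right ?_ h2
      exact le_mul_of_one_le_right hC0.le h3
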